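/- arXiv:1601.04268 — 3 statements merged into one kernel-verified Lean document; each statement's English description precedes it below -/
import Mathlib

section
/- Let K = [[k₁,k₂],[k₂,k₁]] be a positive definite real 2×2 matrix. Then there exist an invertible real 2×2 matrix K₀ and ε ∈ {1,−1} such that K₀ K ᵗK₀ = I and qK₀ = ε K₀ q. -/
open Matrix

noncomputable section

abbrev Mat2R : Type := Matrix (Fin 2) (Fin 2) ℝ

/-- `q = [[0,1],[1,0]]`. -/
def qR : Mat2R := !![0, 1; 1, 0]

/-!
The matrix `K₀ = K ^ (-1/2)` is positive definite and satisfies `K₀ K ᵗK₀ = I`. Being a function of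
`K`, it commutes with everything that commutes with `K`, and the shape of `K` says exactly that
`K` commutes with `q`; so `ε = 1` works.
-/

section StrictlyPositive

variable {A : Type*} [Ring A] [StarRing A] [Algebra ℝ A] [TopologicalSpace A] [PartialOrder A]
  [StarOrderedRing A] [ContinuousFunctionalCalculus ℝ A IsSelfAdjoint] [NonnegSpectrumClass ℝ A]

/- `CFC.conjugate_rpow_neg_one_half` is this identity for complex C⋆-algebras, which leaves out
real matrices. -/
theorem rpow_neg_half_mul_mul_rpow_neg_half {a : A} (ha : IsStrictlyPositive a) :
    a ^ (-(1 / 2) : ℝ) * a * a ^ (-(1 / 2) : ℝ) = 1 := by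
  calc
    a ^ (-(1 / 2) : ℝ) * a * a ^ (-(1 / 2) : ℝ)
    _ = a ^ (-(1 / 2) : ℝ) * a ^ (1 : ℝ) * a ^ (-(1 / 2) : ℝ) := by
        rw [CFC.rpow_one a ha.nonneg]
    _ = a ^ (-(1 / 2) + 1 + -(1 / 2) : ℝ) := by
        rw [CFC.rpow_add ha.isUnit, CFC.rpow_add ha.isUnit]
    _ = a ^ (0 : ℝ) := by norm_num
    _ = 1 := CFC.rpow_zero a ha.nonneg

variable [IsTopologicalRing A] [T2Space A]

theorem commute_rpow_right {a b : A} (h : Commute b a) (y : ℝ) : Commute b (a ^ y) :=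
  (h.symm.cfc_nnreal (· ^ y)).symm

theorem stmt_3_general {a : A} (ha : IsStrictlyPositive a) :
    ∃ b : A, IsStrictlyPositive b ∧ b * a * star b = 1 ∧ ∀ q, Commute q a → Commute q b := by
  have hb : IsStrictlyPositive (a ^ (-(1 / 2) : ℝ)) := ha.rpow a _
  refine ⟨a ^ (-(1 / 2) : ℝ), hb, ?_, fun q hq ↦ commute_rpow_right hq _⟩
  rw [hb.isSelfAdjoint.star_eq, rpow_neg_half_mul_mul_rpow_neg_half ha]

end StrictlyPositive

theorem commute_qR_iff {K : Mat2R} : Commute qR K ↔ K 1 1 = K 0 0 ∧ K 1 0 = K 0 1 := by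
  simp only [commute_iff_eq, qR, ← Matrix.ext_iff, Fin.forall_fin_two, Matrix.mul_apply,
    Fin.sum_univ_two, Matrix.of_apply, Matrix.cons_val_zero, Matrix.cons_val_one]
  grind

/-- for a positive definite real bi-symmetric `K = [[k₁,k₂],[k₂,k₁]]`
there are an invertible real `K₀` and `ε = ±1` with `K₀ K ᵗK₀ = I` and `q K₀ = ε K₀ q`. -/
theorem stmt_3 (K : Mat2R) (hsym : K 1 1 = K 0 0 ∧ K 1 0 = K 0 1) (hpos : K.PosDef) :
    ∃ (K₀ : Mat2R) (ε : ℝ), (ε = 1 ∨ ε = -1) ∧ IsUnit K₀ ∧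
      K₀ * K * K₀ᵀ = 1 ∧ qR * K₀ = ε • (K₀ * qR) := by
  open scoped MatrixOrder in
  obtain ⟨K₀, hK₀, hone, hcomm⟩ := stmt_3_general hpos.isStrictlyPositive
  exact ⟨K₀, 1, .inl rfl, hK₀.isUnit, hone, by
    simpa only [one_smul] using (hcomm qR (commute_qR_iff.2 hsym)).eq⟩
end
end

section
/- Every bijective holomorphic map f from Ĥ₂ onto itself with holomorphic inverse (Ĥ₂ regarded as an open subset of ℂ² via Z = [[τ,z],[z,τ]] ↦ (τ,z)) is of the form f(Z) = M<Z> for some M ∈ Ω̂₂. Moreover, two elements M, M′ ∈ Ω̂₂ induce the same map of Ĥ₂ if and only if M′ ∈ {M, −M, QM, −QM}, so the group of all biholomorphic self-maps of Ĥ₂ is isomorphic to the quotient group Ω̂₂/{±I, ±Q}. -/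
open Matrix Complex

noncomputable section

abbrev Mat2 : Type := Matrix (Fin 2) (Fin 2) ℂ
abbrev Mat4 : Type := Matrix (Fin 2 ⊕ Fin 2) (Fin 2 ⊕ Fin 2) ℝ

/-- `J = [[0, I₂],[−I₂, 0]]` (4×4). -/
def Jmat : Mat4 := Matrix.fromBlocks 0 1 (-1) 0

/-- `Q = diag(q, q)` (4×4). -/
def Qmat : Mat4 := Matrix.fromBlocks qR 0 0 qR

/-- `Ω₂ = Sp(4,ℝ) = {M : ᵗM J M = J}`. -/
def Omega2 : Set Mat4 := {M | Mᵀ * Jmat * M = Jmat}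

/-- The new Siegel upper half space `Ĥ₂`: bi-symmetric `Z = [[τ,z],[z,τ]]` with `Im τ > |Im z|`. -/
def Hhat : Set Mat2 :=
  {Z | Z 1 1 = Z 0 0 ∧ Z 1 0 = Z 0 1 ∧ |(Z 0 1).im| < (Z 0 0).im}

/-- The action `M<Z> = (AZ+B)(CZ+D)⁻¹` of a real 4×4 matrix in 2×2 blocks on `Z ∈ ℂ^{2×2}`. -/
def act (M : Mat4) (Z : Mat2) : Mat2 :=
  (M.toBlocks₁₁.map Complex.ofReal * Z + M.toBlocks₁₂.map Complex.ofReal) *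
    (M.toBlocks₂₁.map Complex.ofReal * Z + M.toBlocks₂₂.map Complex.ofReal)⁻¹

/-- `Ω̂₂ = {M ∈ Ω₂ : M<Z> ∈ Ĥ₂ for all Z ∈ Ĥ₂}`. -/
def OmegaHat : Set Mat4 := {M | M ∈ Omega2 ∧ ∀ Z ∈ Hhat, act M Z ∈ Hhat}

/-- The bi-symmetric matrix `[[τ,z],[z,τ]]` associated to `(τ, z) ∈ ℂ²`. -/
def mk2 (p : ℂ × ℂ) : Mat2 := !![p.1, p.2; p.2, p.1]

/-- `Ĥ₂` regarded as a subset of `ℂ²`. -/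
def HhatP : Set (ℂ × ℂ) := {p | mk2 p ∈ Hhat}

/-!
The eigenvalues `τ + z` and `τ - z` of `[[τ, z], [z, τ]]` identify `Ĥ₂` with a product of two upper
half-planes. A biholomorphic self-map of a product of half-planes can be normalised by Möbius
transformations of the factors to fix `(i, …, i)`, and the Cayley transform turns it into a
biholomorphic self-map of the polydisc fixing the origin. By the Schwarz lemma for the map and its
inverse, such a map preserves the sup norm; so along each coordinate axis some component attains
equality in the Schwarz lemma, and this forces the component to be a rotation of that single
coordinate. Hence the map is a permutation of the coordinates followed by Möbius transformations
of the factors. Pairs of elements of `SL(2, ℝ)` embed into `Sp(4, ℝ)` by blocks commuting with `q`,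
and `diag(1, -1, 1, -1)` interchanges the eigenvalues, so all these maps come from `Ω̂₂`.

If `M` and `M'` induce the same map then `M⁻¹M'` fixes `Ĥ₂` pointwise. Testing on `it·I` and on one
non-scalar point shows that such a matrix is `diag(T, T)` with `T` orthogonal and bi-symmetric, so
it is one of `±I`, `±Q`. The same argument applied to `M` and `QM` gives `QM = ±MQ`, which allows
the kernel element to be moved to the left of `M`.
-/

open Metric Set UpperHalfPlane
open scoped MatrixGroups

section Biholomorphic

variable {E F G : Type*} [NormedAddCommGroup E] [NormedSpace ℂ E] [NormedAddCommGroup F]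
  [NormedSpace ℂ F] [NormedAddCommGroup G] [NormedSpace ℂ G]

/-- `f` restricts to a biholomorphic map from `U` onto `V` whose inverse is the restriction
of `g`. -/
structure IsBiholomorphic (f : E → F) (g : F → E) (U : Set E) (V : Set F) : Prop where
  mapsTo : MapsTo f U V
  mapsTo_inv : MapsTo g V U
  invOn : InvOn g f U V
  differentiableOn : DifferentiableOn ℂ f U
  differentiableOn_inv : DifferentiableOn ℂ g V

namespace IsBiholomorphic

variable {f : E → F} {g : F → E} {U : Set E} {V : Set F}

theorem symm (h : IsBiholomorphic f g U V) : IsBiholomorphic g f V U where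
  mapsTo := h.mapsTo_inv
  mapsTo_inv := h.mapsTo
  invOn := h.invOn.symm
  differentiableOn := h.differentiableOn_inv
  differentiableOn_inv := h.differentiableOn

theorem trans {f' : F → G} {g' : G → F} {W : Set G} (h : IsBiholomorphic f g U V)
    (h' : IsBiholomorphic f' g' V W) : IsBiholomorphic (f' ∘ f) (g ∘ g') U W where
  mapsTo := h'.mapsTo.comp h.mapsTo
  mapsTo_inv := h.mapsTo_inv.comp h'.mapsTo_inv
  invOn := h.invOn.comp h'.invOn h.mapsTo h'.mapsTo_inv
  differentiableOn := h'.differentiableOn.comp h.differentiableOn h.mapsTo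
  differentiableOn_inv := h.differentiableOn_inv.comp h'.differentiableOn_inv h'.mapsTo_inv

theorem pi {ι : Type*} [Fintype ι] {E F : ι → Type*} [∀ i, NormedAddCommGroup (E i)]
    [∀ i, NormedSpace ℂ (E i)] [∀ i, NormedAddCommGroup (F i)] [∀ i, NormedSpace ℂ (F i)]
    {f : ∀ i, E i → F i} {g : ∀ i, F i → E i} {U : ∀ i, Set (E i)} {V : ∀ i, Set (F i)}
    (h : ∀ i, IsBiholomorphic (f i) (g i) (U i) (V i)) :
    IsBiholomorphic (Pi.map f) (Pi.map g) (univ.pi U) (univ.pi V) where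
  mapsTo _ hx i _ := (h i).mapsTo (hx i trivial)
  mapsTo_inv _ hy i _ := (h i).mapsTo_inv (hy i trivial)
  invOn := ⟨fun _ hx ↦ funext fun i ↦ (h i).invOn.1 (hx i trivial),
    fun _ hy ↦ funext fun i ↦ (h i).invOn.2 (hy i trivial)⟩
  differentiableOn := differentiableOn_pi.2 fun i ↦
    (h i).differentiableOn.comp (differentiable_apply i).differentiableOn fun _ hx ↦ hx i trivial
  differentiableOn_inv := differentiableOn_pi.2 fun i ↦
    (h i).differentiableOn_inv.comp (differentiable_apply i).differentiableOn
      fun _ hy ↦ hy i trivial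

theorem norm_map_eq_of_map_zero (h : IsBiholomorphic f g (ball 0 1) (ball 0 1)) (hf₀ : f 0 = 0)
    {p : E} (hp : p ∈ ball 0 1) : ‖f p‖ = ‖p‖ := by
  have hg₀ : g 0 = 0 := by simpa [hf₀] using h.invOn.1 (mem_ball_self one_pos)
  apply le_antisymm
  · exact norm_le_norm_of_mapsTo_ball h.differentiableOn
      (h.mapsTo.mono_right ball_subset_closedBall) hf₀ (mem_ball_zero_iff.1 hp)
  · calc ‖p‖ = ‖g (f p)‖ := by rw [h.invOn.1 hp]
      _ ≤ ‖f p‖ := norm_le_norm_of_mapsTo_ball h.differentiableOn_inv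
        (h.mapsTo_inv.mono_right ball_subset_closedBall) hg₀ (mem_ball_zero_iff.1 (h.mapsTo hp))

end IsBiholomorphic

end Biholomorphic

section SchwarzRigidity

variable {E G : Type*} [NormedAddCommGroup E] [NormedSpace ℂ E] [NormedAddCommGroup G]
  [NormedSpace ℂ G]

theorem eqOn_ball_of_forall_lt_norm [CompleteSpace G] {f g : ℂ → G}
    (hf : DifferentiableOn ℂ f (ball 0 1)) (hg : DifferentiableOn ℂ g (ball 0 1)) {r : ℝ}
    (hr : r < 1) (h : ∀ z ∈ ball 0 1, r < ‖z‖ → f z = g z) : EqOn f g (ball 0 1) := by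
  obtain ⟨t, hrt, ht⟩ := exists_between (max_lt hr one_pos)
  have ht_norm : ‖(t : ℂ)‖ = t := Complex.norm_of_nonneg ((le_max_right r 0).trans hrt.le)
  have ht_mem : (t : ℂ) ∈ ball 0 1 := by rwa [mem_ball_zero_iff, ht_norm]
  have hrt_norm : r < ‖(t : ℂ)‖ := ((le_max_left r 0).trans_lt hrt).trans_eq ht_norm.symm
  have hnear : f =ᶠ[nhds (t : ℂ)] g := by
    filter_upwards [isOpen_ball.mem_nhds ht_mem,
      (isOpen_lt continuous_const continuous_norm).mem_nhds hrt_norm] with z hz hrz using h z hz hrz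
  exact (hf.analyticOnNhd isOpen_ball).eqOn_of_preconnected_of_eventuallyEq
    (hg.analyticOnNhd isOpen_ball) (convex_ball _ _).isPreconnected ht_mem hnear

variable [StrictConvexSpace ℝ G]

theorem exists_eqOn_smul_of_norm_le_norm {f : ℂ → G} (hd : DifferentiableOn ℂ f (ball 0 1))
    (hle : ∀ z ∈ ball 0 1, ‖f z‖ ≤ ‖z‖) {z₀ : ℂ} (hz₀ : z₀ ∈ ball 0 1) (hne : z₀ ≠ 0)
    (heq : ‖f z₀‖ = ‖z₀‖) : ∃ α : G, ‖α‖ = 1 ∧ EqOn f (fun z ↦ z • α) (ball 0 1) := by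
  have hf₀ : f 0 = 0 := by simpa using hle 0 (mem_ball_self one_pos)
  have hmaps : MapsTo f (ball 0 1) (closedBall (f 0) 1) := fun z hz ↦ by
    rw [hf₀, mem_closedBall_zero_iff]
    exact (hle z hz).trans (mem_ball_zero_iff.1 hz).le
  have hslope : ‖dslope f 0 z₀‖ = 1 / 1 := by
    rw [dslope_of_ne _ hne, slope_def_module, hf₀, sub_zero, sub_zero, norm_smul, heq, norm_inv,
      inv_mul_cancel₀ (norm_ne_zero_iff.2 hne), div_one]
  obtain ⟨α, hα, h⟩ := affine_of_mapsTo_ball_of_exists_norm_dslope_eq_div' hd hmaps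
    ⟨z₀, hz₀, hslope⟩
  exact ⟨α, by simpa using hα, by simpa [hf₀] using h⟩

/- On the slice `w = 0` this is the equality case of the Schwarz lemma. For fixed `z` the function
`w ↦ F (z, w)` then attains its maximal norm on `‖w‖ < ‖z‖` at `w = 0`, so it is constant there,
and the identity theorem in `z` extends the formula to the whole ball. -/
theorem exists_eqOn_smul_fst_of_norm_le_norm [CompleteSpace G] {F : ℂ × E → G}
    (hd : DifferentiableOn ℂ F (ball 0 1)) (hle : ∀ p ∈ ball 0 1, ‖F p‖ ≤ ‖p‖) {z₀ : ℂ}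
    (hz₀ : z₀ ∈ ball 0 1) (hne : z₀ ≠ 0) (heq : ‖F (z₀, 0)‖ = ‖z₀‖) :
    ∃ α : G, ‖α‖ = 1 ∧ EqOn F (fun p ↦ p.1 • α) (ball 0 1) := by
  have hmem {z : ℂ} {w : E} (hz : z ∈ ball 0 1) (hw : w ∈ ball 0 1) :
      (z, w) ∈ ball (0 : ℂ × E) 1 := by
    rw [← Prod.mk_zero_zero, ← ball_prod_same]
    exact ⟨hz, hw⟩
  have hd_fst {w : E} (hw : w ∈ ball 0 1) :
      DifferentiableOn ℂ (fun z ↦ F (z, w)) (ball 0 1) :=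
    hd.comp (by fun_prop) fun _ hz ↦ hmem hz hw
  have hd_snd {z : ℂ} (hz : z ∈ ball 0 1) :
      DifferentiableOn ℂ (fun w ↦ F (z, w)) (ball 0 1) :=
    hd.comp (by fun_prop) fun _ hw ↦ hmem hz hw
  obtain ⟨α, hα, hslice⟩ := exists_eqOn_smul_of_norm_le_norm (hd_fst (mem_ball_self one_pos))
    (fun z hz ↦ by simpa using hle (z, 0) (hmem hz (mem_ball_self one_pos))) hz₀ hne heq
  refine ⟨α, hα, ?_⟩
  have hcone {z : ℂ} {w : E} (hz : z ∈ ball 0 1) (hwz : ‖w‖ < ‖z‖) : F (z, w) = z • α := by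
    have hmax : IsMaxOn (norm ∘ fun v ↦ F (z, v)) (ball 0 ‖z‖) 0 := fun v hv ↦ by
      have hvz : ‖v‖ < ‖z‖ := mem_ball_zero_iff.1 hv
      calc ‖F (z, v)‖ ≤ ‖(z, v)‖ :=
            hle _ (hmem hz (ball_subset_ball (mem_ball_zero_iff.1 hz).le hv))
        _ = ‖z‖ := max_eq_left hvz.le
        _ = ‖z • α‖ := by rw [norm_smul, hα, mul_one]
        _ = ‖F (z, 0)‖ := congrArg norm (hslice hz).symm
    exact (Complex.eqOn_of_isPreconnected_of_isMaxOn_norm (convex_ball _ _).isPreconnected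
      isOpen_ball ((hd_snd hz).mono (ball_subset_ball (mem_ball_zero_iff.1 hz).le))
      (mem_ball_self ((norm_nonneg w).trans_lt hwz)) hmax (mem_ball_zero_iff.2 hwz)).trans
      (hslice hz)
  rintro ⟨z, w⟩ hzw
  rw [← Prod.mk_zero_zero, ← ball_prod_same] at hzw
  exact eqOn_ball_of_forall_lt_norm (hd_fst hzw.2) (by fun_prop) (mem_ball_zero_iff.1 hzw.2)
    (fun _ hv hwv ↦ hcone hv hwv) hzw.1

end SchwarzRigidity

section Polydisc

variable {ι : Type*} [Fintype ι]

theorem exists_eqOn_smul_apply_of_norm_le_norm [DecidableEq ι] {G : Type*} [NormedAddCommGroup G]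
    [NormedSpace ℂ G] [StrictConvexSpace ℝ G] [CompleteSpace G] {F : (ι → ℂ) → G}
    (hd : DifferentiableOn ℂ F (ball 0 1)) (hle : ∀ p ∈ ball 0 1, ‖F p‖ ≤ ‖p‖) {j : ι} {z₀ : ℂ}
    (hz₀ : z₀ ∈ ball 0 1) (hne : z₀ ≠ 0) (heq : ‖F (Pi.single j z₀)‖ = ‖z₀‖) :
    ∃ α : G, ‖α‖ = 1 ∧ EqOn F (fun p ↦ p j • α) (ball 0 1) := by
  have hnorm (q : ℂ × (ι → ℂ)) : ‖Function.update q.2 j q.1‖ ≤ ‖q‖ := by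
    refine (pi_norm_le_iff_of_nonneg (norm_nonneg q)).2 fun i ↦ ?_
    rcases eq_or_ne i j with rfl | hij
    · simpa only [Function.update_self] using norm_fst_le q
    · simpa only [Function.update_of_ne hij] using (norm_le_pi_norm q.2 i).trans (norm_snd_le q)
  have hmaps : MapsTo (fun q : ℂ × (ι → ℂ) ↦ Function.update q.2 j q.1) (ball 0 1) (ball 0 1) :=
    fun q hq ↦ mem_ball_zero_iff.2 ((hnorm q).trans_lt (mem_ball_zero_iff.1 hq))
  have hd_update : Differentiable ℂ fun q : ℂ × (ι → ℂ) ↦ Function.update q.2 j q.1 :=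
    differentiable_pi.2 fun i ↦ by
      rcases eq_or_ne i j with rfl | hij
      · simpa only [Function.update_self] using differentiable_fst
      · simp only [Function.update_of_ne hij]
        fun_prop
  obtain ⟨α, hα, h⟩ := exists_eqOn_smul_fst_of_norm_le_norm
    (hd.comp hd_update.differentiableOn hmaps)
    (fun q hq ↦ (hle _ (hmaps hq)).trans (hnorm q)) hz₀ hne heq
  refine ⟨α, hα, fun p hp ↦ ?_⟩
  have hpj : (p j, p) ∈ ball (0 : ℂ × (ι → ℂ)) 1 := by
    rw [mem_ball_zero_iff] at hp ⊢
    exact max_lt ((norm_le_pi_norm p j).trans_lt hp) hp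
  simpa using h hpj

theorem exists_perm_eq_mul_of_norm_map_eq {f : (ι → ℂ) → ι → ℂ}
    (hd : DifferentiableOn ℂ f (ball 0 1)) (hnorm : ∀ p ∈ ball 0 1, ‖f p‖ = ‖p‖) :
    ∃ (σ : Equiv.Perm ι) (α : ι → ℂ), (∀ i, ‖α i‖ = 1) ∧
      ∀ p ∈ ball 0 1, ∀ i, f p i = α i * p (σ i) := by
  classical
  have hhalf : (1 / 2 : ℂ) ∈ ball 0 1 := by rw [mem_ball_zero_iff]; norm_num
  have hsingle (j : ι) : Pi.single j (1 / 2) ∈ ball (0 : ι → ℂ) 1 := by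
    rwa [mem_ball_zero_iff, Pi.norm_single, ← mem_ball_zero_iff]
  have hcoord (j : ι) : ∃ i, ∃ α : ℂ, ‖α‖ = 1 ∧ ∀ p ∈ ball 0 1, f p i = α * p j := by
    have : Nonempty ι := ⟨j⟩
    obtain ⟨i, hi⟩ := Finite.exists_max fun i ↦ ‖f (Pi.single j (1 / 2)) i‖
    have heq := calc
      ‖f (Pi.single j (1 / 2)) i‖ = ‖f (Pi.single j (1 / 2))‖ :=
        (norm_le_pi_norm _ i).antisymm ((pi_norm_le_iff_of_nonempty _).2 hi)
      _ = ‖(Pi.single j (1 / 2) : ι → ℂ)‖ := hnorm _ (hsingle j)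
      _ = ‖(1 / 2 : ℂ)‖ := Pi.norm_single _
    obtain ⟨α, hα, h⟩ := exists_eqOn_smul_apply_of_norm_le_norm (differentiableOn_pi.1 hd i)
      (fun p hp ↦ (norm_le_pi_norm (f p) i).trans (hnorm p hp).le) hhalf (by norm_num) heq
    exact ⟨i, α, hα, fun p hp ↦ (h hp).trans (mul_comm _ _)⟩
  choose τ α hα hτ using hcoord
  have hτ_inj : Function.Injective τ := fun j k hjk ↦ by
    by_contra hne
    have hj : f (Pi.single j (1 / 2)) (τ j) = α j * (1 / 2) := by
      rw [hτ j _ (hsingle j), Pi.single_eq_same]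
    have hk : f (Pi.single j (1 / 2)) (τ j) = 0 := by
      rw [hjk, hτ k _ (hsingle j), Pi.single_eq_of_ne' hne, mul_zero]
    have hαj : α j = 0 := by simpa using hj.symm.trans hk
    simpa [hαj] using hα j
  let τ' : Equiv.Perm ι := .ofBijective τ (Finite.injective_iff_bijective.1 hτ_inj)
  refine ⟨τ'.symm, α ∘ τ'.symm, fun i ↦ hα _, fun p hp i ↦ ?_⟩
  simpa [τ', Equiv.ofBijective_apply_symm_apply] using hτ (τ'.symm i) p hp

end Polydisc

section HalfPlane

/-- The Cayley transform, which maps the upper half-plane onto the unit disc and `i` to `0`. -/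
def cayley (z : ℂ) : ℂ := (z - Complex.I) / (z + Complex.I)

/-- The inverse of the Cayley transform, from the unit disc onto the upper half-plane. -/
def cayleyInv (u : ℂ) : ℂ := Complex.I * (1 + u) / (1 - u)

theorem add_I_ne_zero_of_im_pos {z : ℂ} (hz : 0 < z.im) : z + Complex.I ≠ 0 := fun h ↦ by
  have him := congrArg Complex.im h
  simp only [add_im, Complex.I_im, zero_im] at him
  linarith

theorem one_sub_ne_zero_of_norm_lt_one {u : ℂ} (hu : ‖u‖ < 1) : 1 - u ≠ 0 := fun h ↦ by
  simp [← sub_eq_zero.1 h] at hu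

theorem norm_cayley_lt_one {z : ℂ} (hz : 0 < z.im) : ‖cayley z‖ < 1 := by
  rw [cayley, norm_div, div_lt_one (norm_pos_iff.2 (add_I_ne_zero_of_im_pos hz)),
    ← sq_lt_sq₀ (norm_nonneg _) (norm_nonneg _), ← normSq_eq_norm_sq, ← normSq_eq_norm_sq,
    normSq_apply, normSq_apply]
  simp only [sub_re, add_re, Complex.I_re, sub_im, add_im, Complex.I_im]
  linarith

theorem im_cayleyInv_pos {u : ℂ} (hu : ‖u‖ < 1) : 0 < (cayleyInv u).im := by
  have him : (cayleyInv u).im = (1 - ‖u‖ ^ 2) / normSq (1 - u) := by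
    rw [cayleyInv, Complex.div_im, ← sub_div, ← normSq_eq_norm_sq, normSq_apply u]
    simp only [mul_im, mul_re, add_re, add_im, sub_re, sub_im, one_re, one_im, Complex.I_re,
      Complex.I_im]
    ring
  rw [him]
  exact div_pos (by nlinarith [norm_nonneg u])
    (normSq_pos.2 (one_sub_ne_zero_of_norm_lt_one hu))

theorem cayleyInv_cayley {z : ℂ} (hz : 0 < z.im) : cayleyInv (cayley z) = z := by
  have h₁ := add_I_ne_zero_of_im_pos hz
  have h₂ := one_sub_ne_zero_of_norm_lt_one (norm_cayley_lt_one hz)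
  rw [cayleyInv, div_eq_iff h₂, cayley]
  field_simp
  ring

theorem cayley_cayleyInv {u : ℂ} (hu : ‖u‖ < 1) : cayley (cayleyInv u) = u := by
  have h₁ := add_I_ne_zero_of_im_pos (im_cayleyInv_pos hu)
  have h₂ := one_sub_ne_zero_of_norm_lt_one hu
  rw [cayley, div_eq_iff h₁, cayleyInv]
  field_simp
  ring

theorem isBiholomorphic_cayley :
    IsBiholomorphic cayley cayleyInv upperHalfPlaneSet (ball 0 1) where
  mapsTo _ hz := mem_ball_zero_iff.2 (norm_cayley_lt_one hz)
  mapsTo_inv _ hu := im_cayleyInv_pos (mem_ball_zero_iff.1 hu)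
  invOn := ⟨fun _ hz ↦ cayleyInv_cayley hz, fun _ hu ↦ cayley_cayleyInv (mem_ball_zero_iff.1 hu)⟩
  differentiableOn :=
    (differentiable_id.sub_const _).differentiableOn.div
      (differentiable_id.add_const _).differentiableOn fun _ hz ↦ add_I_ne_zero_of_im_pos hz
  differentiableOn_inv :=
    ((differentiable_id.const_add _).const_mul _).differentiableOn.div
      (differentiable_id.const_sub _).differentiableOn
      fun _ hu ↦ one_sub_ne_zero_of_norm_lt_one (mem_ball_zero_iff.1 hu)

theorem isBiholomorphic_smul (g : SL(2, ℝ)) :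
    IsBiholomorphic (fun z ↦ ↑(g • ofComplex z)) (fun z ↦ ↑(g⁻¹ • ofComplex z))
      upperHalfPlaneSet upperHalfPlaneSet := by
  have hd (g : SL(2, ℝ)) :
      DifferentiableOn ℂ (fun z ↦ ((g • ofComplex z : ℍ) : ℂ)) upperHalfPlaneSet := fun z hz ↦
    (analyticAt_smul (g := SpecialLinearGroup.mapGL ℝ g) (by simp)
      ⟨z, hz⟩).differentiableAt.differentiableWithinAt
  have hinv (g : SL(2, ℝ)) {z : ℂ} (hz : 0 < z.im) :
      ((g⁻¹ • ofComplex ↑(g • ofComplex z) : ℍ) : ℂ) = z := by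
    rw [ofComplex_apply, inv_smul_smul, ofComplex_apply_of_im_pos hz]
  exact {
    mapsTo := fun _ _ ↦ im_pos _
    mapsTo_inv := fun _ _ ↦ im_pos _
    invOn := ⟨fun _ hz ↦ hinv g hz, fun _ hz ↦ by simpa only [inv_inv] using hinv g⁻¹ hz⟩
    differentiableOn := hd g
    differentiableOn_inv := hd g⁻¹ }

/- If `β² = α` then the rotation with first row `(Re β, Im β)` works: it turns `z - i` into
`β (z - i)` and `z + i` into `β⁻¹ (z + i)`, up to the common denominator. -/
theorem exists_cayley_smul_eq_mul {α : ℂ} (hα : ‖α‖ = 1) :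
    ∃ k : SL(2, ℝ), ∀ z : ℍ, cayley ↑(k • z) = α * cayley z := by
  obtain ⟨β, rfl⟩ : ∃ β : ℂ, β ^ 2 = α := IsAlgClosed.exists_pow_nat_eq α two_pos
  have hβ : normSq β = 1 := by rw [normSq_eq_norm_sq, ← norm_pow, hα]
  have hdet : !![β.re, β.im; -β.im, β.re].det = 1 := by
    rw [det_fin_two_of, ← hβ, normSq_apply]
    ring
  let k : SL(2, ℝ) := ⟨_, hdet⟩
  refine ⟨k, fun z ↦ ?_⟩
  have hk : ((k • z : ℍ) : ℂ) = (β.re * z + β.im) / (-β.im * z + β.re) := by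
    rw [coe_specialLinearGroup_apply]
    simp [k]
  have hden : -β.im * (z : ℂ) + β.re ≠ 0 := by
    simpa [k] using linear_ne_zero z (k.row_ne_zero (i := 1))
  have hsub : (β.re * z + β.im : ℂ) - Complex.I * (-β.im * z + β.re) = β * (z - Complex.I) := by
    linear_combination (z - Complex.I) * Complex.re_add_im β + β.im * I_sq
  have hadd : (β.re * z + β.im : ℂ) + Complex.I * (-β.im * z + β.re) =
      β⁻¹ * (z + Complex.I) := by
    have hinv : (β.re : ℂ) - β.im * Complex.I = β⁻¹ := by
      simp [Complex.inv_def, hβ, Complex.ext_iff]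
    linear_combination (z + Complex.I) * hinv + β.im * I_sq
  calc cayley ↑(k • z)
      = (β * (z - Complex.I)) / (β⁻¹ * (z + Complex.I)) := by
        rw [cayley, hk, ← hsub, ← hadd, div_sub' hden, div_add' _ _ _ hden,
          div_div_div_cancel_right₀ hden]
        ring
    _ = β ^ 2 * cayley z := by
        rw [cayley]
        field_simp

end HalfPlane

section HalfPlaneProduct

variable {ι : Type*} [Fintype ι]

theorem exists_perm_smul_of_isBiholomorphic_of_map_I {f g : (ι → ℂ) → ι → ℂ}
    (h : IsBiholomorphic f g (univ.pi fun _ ↦ upperHalfPlaneSet)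
      (univ.pi fun _ ↦ upperHalfPlaneSet)) (hI : f (fun _ ↦ Complex.I) = fun _ ↦ Complex.I) :
    ∃ (σ : Equiv.Perm ι) (k : ι → SL(2, ℝ)),
      ∀ (w : ι → ℍ) (i : ι), f (fun j ↦ w j) i = ↑(k i • w (σ i)) := by
  have hc : IsBiholomorphic (Pi.map fun _ : ι ↦ cayley) (Pi.map fun _ ↦ cayleyInv)
      (univ.pi fun _ ↦ upperHalfPlaneSet) (ball 0 1) := by
    rw [ball_pi _ one_pos]
    exact IsBiholomorphic.pi fun _ ↦ isBiholomorphic_cayley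
  have hF := (hc.symm.trans h).trans hc
  have hF₀ : (Pi.map (fun _ ↦ cayley) ∘ f ∘ Pi.map fun _ ↦ cayleyInv) 0 = 0 := by
    have : Pi.map (fun _ : ι ↦ cayleyInv) 0 = fun _ ↦ Complex.I := by ext; simp [cayleyInv]
    simp only [Function.comp_apply, this, hI]
    ext
    simp [cayley]
  obtain ⟨σ, α, hα, hσ⟩ := exists_perm_eq_mul_of_norm_map_eq hF.differentiableOn
    fun p hp ↦ hF.norm_map_eq_of_map_zero hF₀ hp
  choose k hk using fun i ↦ exists_cayley_smul_eq_mul (hα i)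
  refine ⟨σ, k, fun w i ↦ ?_⟩
  have hw : (fun j ↦ (w j : ℂ)) ∈ univ.pi fun _ ↦ upperHalfPlaneSet := fun j _ ↦ (w j).im_pos
  have hcayley : cayley (f (fun j ↦ w j) i) = cayley ↑(k i • w (σ i)) := by
    have := hσ _ (hc.mapsTo hw) i
    simp only [Function.comp_apply, hc.invOn.1 hw] at this
    rw [hk]
    exact this
  exact isBiholomorphic_cayley.invOn.1.injOn (h.mapsTo hw i trivial) (k i • w (σ i)).im_pos hcayley

theorem exists_perm_smul_of_isBiholomorphic {f g : (ι → ℂ) → ι → ℂ}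
    (h : IsBiholomorphic f g (univ.pi fun _ ↦ upperHalfPlaneSet)
      (univ.pi fun _ ↦ upperHalfPlaneSet)) :
    ∃ (σ : Equiv.Perm ι) (k : ι → SL(2, ℝ)),
      ∀ (w : ι → ℍ) (i : ι), f (fun j ↦ w j) i = ↑(k i • w (σ i)) := by
  have hfI (i : ι) : 0 < (f (fun _ ↦ Complex.I) i).im :=
    h.mapsTo (fun _ _ ↦ by simp) i trivial
  choose m hm using fun i ↦
    MulAction.exists_smul_eq SL(2, ℝ) UpperHalfPlane.I (⟨_, hfI i⟩ : ℍ)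
  have hm_inv := IsBiholomorphic.pi fun i ↦ isBiholomorphic_smul (m i)⁻¹
  obtain ⟨σ, k, hk⟩ := exists_perm_smul_of_isBiholomorphic_of_map_I (h.trans hm_inv) (by
    funext i
    have : ofComplex (f (fun _ ↦ Complex.I) i) = m i • UpperHalfPlane.I := by
      rw [hm, ofComplex_apply_of_im_pos (hfI i)]
    simp [Pi.map_apply, this])
  refine ⟨σ, fun i ↦ m i * k i, fun w i ↦ ?_⟩
  have hfw : 0 < (f (fun j ↦ w j) i).im := h.mapsTo (fun j _ ↦ (w j).im_pos) i trivial
  have hki : (m i)⁻¹ • (⟨_, hfw⟩ : ℍ) = k i • w (σ i) := by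
    rw [← ofComplex_apply_of_im_pos hfw]
    exact UpperHalfPlane.ext (hk w i)
  rw [mul_smul, ← hki, smul_inv_smul]

end HalfPlaneProduct

section Bisymm

variable {K : Type*} [Field K] [NeZero (2 : K)]

/-- The bi-symmetric `2 × 2` matrix with eigenvalue `v 0` on `(1, 1)` and `v 1` on `(1, -1)`. -/
def bisymm : (Fin 2 → K) →+* Matrix (Fin 2) (Fin 2) K where
  toFun v := !![(v 0 + v 1) / 2, (v 0 - v 1) / 2; (v 0 - v 1) / 2, (v 0 + v 1) / 2]
  map_one' := by ext i j; fin_cases i <;> fin_cases j <;> simp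
  map_zero' := by ext i j; fin_cases i <;> fin_cases j <;> simp
  map_mul' v w := by
    ext i j
    fin_cases i <;> fin_cases j <;>
      simp only [Fin.zero_eta, Fin.mk_one, Pi.mul_apply, of_apply, cons_val', cons_val_zero,
        cons_val_one, cons_val_fin_one, mul_apply, Fin.sum_univ_two] <;>
      field_simp <;> ring
  map_add' v w := by
    ext i j
    fin_cases i <;> fin_cases j <;> simp [← add_div, add_add_add_comm, add_sub_add_comm]

theorem bisymm_apply (v : Fin 2 → K) :
    bisymm v = !![(v 0 + v 1) / 2, (v 0 - v 1) / 2; (v 0 - v 1) / 2, (v 0 + v 1) / 2] :=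
  rfl

theorem bisymm_injective : Function.Injective (bisymm : (Fin 2 → K) → _) := fun v w h ↦ by
  have h₀ : (v 0 + v 1) / 2 = (w 0 + w 1) / 2 := congrFun₂ h 0 0
  have h₁ : (v 0 - v 1) / 2 = (w 0 - w 1) / 2 := congrFun₂ h 0 1
  field_simp at h₀ h₁
  refine funext (Fin.forall_fin_two.2 ⟨?_, ?_⟩)
  · apply mul_left_cancel₀ (two_ne_zero (α := K))
    linear_combination h₀ + h₁
  · apply mul_left_cancel₀ (two_ne_zero (α := K))
    linear_combination h₀ - h₁

theorem transpose_bisymm (v : Fin 2 → K) : (bisymm v)ᵀ = bisymm v := by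
  ext i j
  fin_cases i <;> fin_cases j <;> rfl

theorem commute_bisymm (v w : Fin 2 → K) : Commute (bisymm v) (bisymm w) :=
  (Commute.all v w).map bisymm

theorem bisymm_inv {v : Fin 2 → K} (hv : ∀ i, v i ≠ 0) : (bisymm v)⁻¹ = bisymm v⁻¹ := by
  have h : v * v⁻¹ = 1 := funext fun i ↦ mul_inv_cancel₀ (hv i)
  exact inv_eq_right_inv (by rw [← map_mul, h, map_one])

theorem bisymm_eq_of_apply_eq {A : Matrix (Fin 2) (Fin 2) K} (h₁ : A 1 1 = A 0 0)
    (h₂ : A 1 0 = A 0 1) : bisymm ![A 0 0 + A 0 1, A 0 0 - A 0 1] = A := by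
  ext i j
  fin_cases i <;> fin_cases j <;> simp [bisymm_apply, h₁, h₂]

theorem bisymm_map_ofReal (v : Fin 2 → ℝ) :
    (bisymm v).map Complex.ofReal = bisymm fun i ↦ (v i : ℂ) := by
  ext i j
  fin_cases i <;> fin_cases j <;> simp [bisymm_apply]

end Bisymm

section EigenvalueCoordinates

theorem bisymm_mem_Hhat_iff {v : Fin 2 → ℂ} : bisymm v ∈ Hhat ↔ ∀ i, 0 < (v i).im := by
  have h : bisymm v ∈ Hhat ↔ |((v 0).im - (v 1).im) / 2| < ((v 0).im + (v 1).im) / 2 := by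
    simp [Hhat, bisymm_apply]
  rw [h, abs_lt, Fin.forall_fin_two]
  constructor <;> rintro ⟨h₁, h₂⟩ <;> constructor <;> linarith

/-- The eigenvalues `τ + z` and `τ - z` of `[[τ, z], [z, τ]]`, as coordinates that identify `Ĥ₂`
with a product of two upper half-planes. -/
def eigenvalues (p : ℂ × ℂ) : Fin 2 → ℂ := ![p.1 + p.2, p.1 - p.2]

/-- The first row `(τ, z)` of the bi-symmetric matrix with given eigenvalues. -/
def ofEigenvalues (v : Fin 2 → ℂ) : ℂ × ℂ :=
  ((v 0 + v 1) / 2, (v 0 - v 1) / 2)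

theorem bisymm_eigenvalues (p : ℂ × ℂ) : bisymm (eigenvalues p) = mk2 p :=
  bisymm_eq_of_apply_eq (A := mk2 p) rfl rfl

theorem mk2_ofEigenvalues (v : Fin 2 → ℂ) : mk2 (ofEigenvalues v) = bisymm v :=
  rfl

theorem isBiholomorphic_eigenvalues :
    IsBiholomorphic eigenvalues ofEigenvalues HhatP (univ.pi fun _ ↦ upperHalfPlaneSet) where
  mapsTo p hp := by
    have h : bisymm (eigenvalues p) ∈ Hhat := by rwa [bisymm_eigenvalues]
    exact fun i _ ↦ bisymm_mem_Hhat_iff.1 h i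
  mapsTo_inv v hv := bisymm_mem_Hhat_iff.2 fun i ↦ hv i trivial
  invOn := by
    refine ⟨fun p _ ↦ ?_, fun v _ ↦ bisymm_injective ?_⟩
    · simp [eigenvalues, ofEigenvalues]
    · rw [bisymm_eigenvalues, mk2_ofEigenvalues]
  differentiableOn := differentiableOn_pi.2 fun i ↦ by
    fin_cases i
    · exact differentiableOn_fst.add differentiableOn_snd
    · exact differentiableOn_fst.sub differentiableOn_snd
  differentiableOn_inv := by
    unfold ofEigenvalues
    fun_prop

/-- The point of `Ĥ₂` with eigenvalues `w 0` and `w 1`. -/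
def ofHalfPlanes (w : Fin 2 → ℍ) : Mat2 := bisymm fun i ↦ (w i : ℂ)

theorem ofHalfPlanes_mem_Hhat (w : Fin 2 → ℍ) : ofHalfPlanes w ∈ Hhat :=
  bisymm_mem_Hhat_iff.2 fun i ↦ (w i).im_pos

theorem exists_ofHalfPlanes_eq {Z : Mat2} (hZ : Z ∈ Hhat) : ∃ w, ofHalfPlanes w = Z := by
  have h := bisymm_eq_of_apply_eq hZ.1 hZ.2.1
  rw [← h, bisymm_mem_Hhat_iff] at hZ
  exact ⟨fun i ↦ ⟨_, hZ i⟩, h⟩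

end EigenvalueCoordinates

section Action

/-- The numerator `AZ + B` of `M<Z>`. -/
def actNum (M : Mat4) (Z : Mat2) : Mat2 :=
  M.toBlocks₁₁.map Complex.ofReal * Z + M.toBlocks₁₂.map Complex.ofReal

/-- The denominator `CZ + D` of `M<Z>`. -/
def actDenom (M : Mat4) (Z : Mat2) : Mat2 :=
  M.toBlocks₂₁.map Complex.ofReal * Z + M.toBlocks₂₂.map Complex.ofReal

variable {M N : Mat4} {Z : Mat2}

/- A singular matrix has inverse `0` in Mathlib, and `0 ∉ Ĥ₂`. -/
theorem isUnit_actDenom_of_act_mem_Hhat (h : act M Z ∈ Hhat) : IsUnit (actDenom M Z) := by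
  by_contra hsing
  have hact : act M Z = actNum M Z * (actDenom M Z)⁻¹ := rfl
  rw [hact, nonsing_inv_eq_ringInverse, Ring.inverse_non_unit _ hsing, mul_zero] at h
  simpa using h.2.2

theorem act_mul_actDenom (h : IsUnit (actDenom M Z)) :
    act M Z * actDenom M Z = actNum M Z :=
  nonsing_inv_mul_cancel_right _ _ ((isUnit_iff_isUnit_det _).1 h)

theorem map_ofReal_mul (A B : Mat2R) :
    (A * B).map Complex.ofReal = A.map Complex.ofReal * B.map Complex.ofReal :=
  Matrix.map_mul (f := Complex.ofRealHom)

theorem actNum_mul (h : IsUnit (actDenom N Z)) :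
    actNum (M * N) Z = actNum M (act N Z) * actDenom N Z := by
  calc actNum (M * N) Z
      = M.toBlocks₁₁.map Complex.ofReal * actNum N Z +
          M.toBlocks₁₂.map Complex.ofReal * actDenom N Z := by
        rw [← fromBlocks_toBlocks M, ← fromBlocks_toBlocks N, fromBlocks_multiply]
        simp only [actNum, actDenom, toBlocks_fromBlocks₁₁, toBlocks_fromBlocks₁₂,
          toBlocks_fromBlocks₂₁, toBlocks_fromBlocks₂₂, map_ofReal_mul,
          Matrix.map_add _ ofReal_add, mul_add, add_mul, mul_assoc]
        abel
    _ = actNum M (act N Z) * actDenom N Z := by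
        rw [← act_mul_actDenom h, ← mul_assoc, ← add_mul]
        rfl

theorem actDenom_mul (h : IsUnit (actDenom N Z)) :
    actDenom (M * N) Z = actDenom M (act N Z) * actDenom N Z := by
  calc actDenom (M * N) Z
      = M.toBlocks₂₁.map Complex.ofReal * actNum N Z +
          M.toBlocks₂₂.map Complex.ofReal * actDenom N Z := by
        rw [← fromBlocks_toBlocks M, ← fromBlocks_toBlocks N, fromBlocks_multiply]
        simp only [actNum, actDenom, toBlocks_fromBlocks₁₁, toBlocks_fromBlocks₁₂,
          toBlocks_fromBlocks₂₁, toBlocks_fromBlocks₂₂, map_ofReal_mul,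
          Matrix.map_add _ ofReal_add, mul_add, add_mul, mul_assoc]
        abel
    _ = actDenom M (act N Z) * actDenom N Z := by
        rw [← act_mul_actDenom h, ← mul_assoc, ← add_mul]
        rfl

theorem act_mul (h : IsUnit (actDenom N Z)) : act (M * N) Z = act M (act N Z) := by
  calc act (M * N) Z = actNum (M * N) Z * (actDenom (M * N) Z)⁻¹ := rfl
    _ = actNum M (act N Z) * (actDenom M (act N Z))⁻¹ := by
      rw [actNum_mul h, actDenom_mul h, Matrix.mul_inv_rev, mul_assoc,
        mul_nonsing_inv_cancel_left _ _ ((isUnit_iff_isUnit_det _).1 h)]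

theorem act_one (Z : Mat2) : act 1 Z = Z := by
  simp [act, ← fromBlocks_one]

theorem act_fromBlocks_diag (T : Mat2R) (Z : Mat2) :
    act (fromBlocks T 0 0 T) Z = T.map Complex.ofReal * Z * (T.map Complex.ofReal)⁻¹ := by
  simp [act]

theorem act_fromBlocks_bisymm {a b c d : Fin 2 → ℝ} {v : Fin 2 → ℂ}
    (h : ∀ i, c i * v i + d i ≠ 0) :
    act (fromBlocks (bisymm a) (bisymm b) (bisymm c) (bisymm d)) (bisymm v) =
      bisymm fun i ↦ (a i * v i + b i) / (c i * v i + d i) := by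
  simp only [act, toBlocks_fromBlocks₁₁, toBlocks_fromBlocks₁₂, toBlocks_fromBlocks₂₁,
    toBlocks_fromBlocks₂₂, bisymm_map_ofReal, ← map_mul, ← map_add]
  have hinv := bisymm_inv (v := (fun i ↦ (c i : ℂ)) * v + fun i ↦ (d i : ℂ)) h
  rw [hinv, ← map_mul]
  rfl

end Action

section Symplectic

theorem mem_Omega2_iff {M : Mat4} : M ∈ Omega2 ↔ M ∈ symplecticGroup (Fin 2) ℝ := by
  have hJ : Jmat = -Matrix.J (Fin 2) ℝ := by simp [Jmat, Matrix.J, fromBlocks_neg]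
  simp [Omega2, hJ, SymplecticGroup.mem_iff']

theorem mul_mem_Omega2 {M N : Mat4} (hM : M ∈ Omega2) (hN : N ∈ Omega2) : M * N ∈ Omega2 := by
  rw [mem_Omega2_iff] at *
  exact mul_mem hM hN

theorem fromBlocks_diag_mem_Omega2_iff {T : Mat2R} :
    fromBlocks T 0 0 T ∈ Omega2 ↔ Tᵀ * T = 1 := by
  simp [mem_Omega2_iff, SymplecticGroup.fromBlocks_mem_iff]

theorem isUnit_of_mem_Omega2 {M : Mat4} (hM : M ∈ Omega2) : IsUnit M :=
  (isUnit_iff_isUnit_det M).2 (SymplecticGroup.symplectic_det (mem_Omega2_iff.1 hM))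

theorem inv_mem_Omega2 {M : Mat4} (hM : M ∈ Omega2) : M⁻¹ ∈ Omega2 := by
  rw [mem_Omega2_iff] at *
  let S : symplecticGroup (Fin 2) ℝ := ⟨M, hM⟩
  exact SymplecticGroup.coe_inv' S ▸ S⁻¹.2

end Symplectic

section MoebiusBlock

/-- The image of `g` under the embedding of `SL(2, ℝ) × SL(2, ℝ)` into `Sp(4, ℝ)` which lets the
factors act on the two eigenvalues of a bi-symmetric matrix. -/
def moebiusBlock (g : Fin 2 → SL(2, ℝ)) : Mat4 :=
  fromBlocks (bisymm fun i ↦ g i 0 0) (bisymm fun i ↦ g i 0 1) (bisymm fun i ↦ g i 1 0)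
    (bisymm fun i ↦ g i 1 1)

theorem moebiusBlock_mem_Omega2 (g : Fin 2 → SL(2, ℝ)) : moebiusBlock g ∈ Omega2 := by
  rw [mem_Omega2_iff, moebiusBlock, SymplecticGroup.fromBlocks_mem_iff]
  simp only [transpose_bisymm]
  refine ⟨commute_bisymm _ _, commute_bisymm _ _, ?_⟩
  rw [← map_mul, ← map_mul, ← map_sub, ← map_one bisymm]
  congr 1
  ext i
  have hdet := (g i).det_coe
  rw [det_fin_two] at hdet
  simp only [Pi.sub_apply, Pi.mul_apply, Pi.one_apply]
  linarith

theorem act_moebiusBlock (g : Fin 2 → SL(2, ℝ)) (w : Fin 2 → ℍ) :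
    act (moebiusBlock g) (ofHalfPlanes w) = ofHalfPlanes fun i ↦ g i • w i := by
  have hden (i : Fin 2) : (g i 1 0 : ℂ) * w i + g i 1 1 ≠ 0 :=
    linear_ne_zero (w i) ((g i).row_ne_zero (i := 1))
  rw [moebiusBlock, ofHalfPlanes, act_fromBlocks_bisymm hden, ofHalfPlanes]
  congr 1
  ext i
  rw [coe_specialLinearGroup_apply]
  simp

end MoebiusBlock

section Permutation

theorem exists_orthogonal_conj_bisymm (σ : Equiv.Perm (Fin 2)) :
    ∃ T : Mat2R, Tᵀ * T = 1 ∧ ∀ v : Fin 2 → ℂ,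
      T.map Complex.ofReal * bisymm v * (T.map Complex.ofReal)⁻¹ = bisymm (v ∘ σ) := by
  obtain rfl | rfl : σ = 1 ∨ σ = Equiv.swap 0 1 := by decide +revert
  · exact ⟨1, by simp, by simp⟩
  · let T : Mat2R := !![1, 0; 0, -1]
    have hT : T * T = 1 := by
      ext i j
      fin_cases i <;> fin_cases j <;> simp [T]
    have hinv : (T.map Complex.ofReal)⁻¹ = T.map Complex.ofReal :=
      inv_eq_right_inv (by rw [← map_ofReal_mul, hT]; simp)
    refine ⟨T, ?_, fun v ↦ ?_⟩
    · rwa [show Tᵀ = T by ext i j; fin_cases i <;> fin_cases j <;> rfl]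
    · rw [hinv]
      ext i j
      fin_cases i <;> fin_cases j <;> simp [T, bisymm_apply, mul_apply, add_comm, ← neg_div]

theorem exists_mem_OmegaHat_act_ofHalfPlanes (σ : Equiv.Perm (Fin 2)) (g : Fin 2 → SL(2, ℝ)) :
    ∃ M ∈ OmegaHat, ∀ w : Fin 2 → ℍ,
      act M (ofHalfPlanes w) = ofHalfPlanes fun i ↦ g i • w (σ i) := by
  obtain ⟨T, hT, hσ⟩ := exists_orthogonal_conj_bisymm σ
  have hperm (w : Fin 2 → ℍ) :
      act (fromBlocks T 0 0 T) (ofHalfPlanes w) = ofHalfPlanes (w ∘ σ) := by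
    rw [act_fromBlocks_diag]
    exact hσ _
  have hact (w : Fin 2 → ℍ) : act (moebiusBlock g * fromBlocks T 0 0 T) (ofHalfPlanes w) =
      ofHalfPlanes fun i ↦ g i • w (σ i) := by
    rw [act_mul (isUnit_actDenom_of_act_mem_Hhat (hperm w ▸ ofHalfPlanes_mem_Hhat _)), hperm,
      act_moebiusBlock]
    rfl
  refine ⟨_, ⟨mul_mem_Omega2 (moebiusBlock_mem_Omega2 g) (fromBlocks_diag_mem_Omega2_iff.2 hT),
    fun Z hZ ↦ ?_⟩, hact⟩
  obtain ⟨w, rfl⟩ := exists_ofHalfPlanes_eq hZ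
  exact hact w ▸ ofHalfPlanes_mem_Hhat _

theorem exists_mem_OmegaHat_act_eq_mk2 {f g : ℂ × ℂ → ℂ × ℂ}
    (h : IsBiholomorphic f g HhatP HhatP) :
    ∃ M ∈ OmegaHat, ∀ p ∈ HhatP, act M (mk2 p) = mk2 (f p) := by
  obtain ⟨σ, k, hk⟩ := exists_perm_smul_of_isBiholomorphic
    ((isBiholomorphic_eigenvalues.symm.trans h).trans isBiholomorphic_eigenvalues)
  obtain ⟨M, hM, hact⟩ := exists_mem_OmegaHat_act_ofHalfPlanes σ k
  refine ⟨M, hM, fun p hp ↦ ?_⟩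
  have heig := isBiholomorphic_eigenvalues.mapsTo hp
  let w (i : Fin 2) : ℍ := ⟨eigenvalues p i, heig i trivial⟩
  have hw : ofHalfPlanes w = mk2 p := bisymm_eigenvalues p
  have hp_eq : ofEigenvalues (fun i ↦ w i) = p := isBiholomorphic_eigenvalues.invOn.1 hp
  calc act M (mk2 p) = ofHalfPlanes fun i ↦ k i • w (σ i) := by rw [← hw, hact]
    _ = bisymm (eigenvalues (f p)) := by
      rw [ofHalfPlanes, ← hp_eq]
      exact congrArg bisymm (funext fun i ↦ (hk w i).symm)
    _ = mk2 (f p) := bisymm_eigenvalues _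

end Permutation

section Kernel

theorem mem_pm_one_Qmat_iff {N : Mat4} :
    N ∈ ({1, -1, Qmat, -Qmat} : Set Mat4) ↔
      ∃ v : Fin 2 → ℝ, v * v = 1 ∧ N = fromBlocks (bisymm v) 0 0 (bisymm v) := by
  have hv (v : Fin 2 → ℝ) : v * v = 1 ↔ v = 1 ∨ v = -1 ∨ v = ![1, -1] ∨ v = -![1, -1] := by
    simp only [funext_iff, Fin.forall_fin_two, Pi.mul_apply, Pi.one_apply, Pi.neg_apply,
      cons_val_zero, cons_val_one, neg_neg, mul_self_eq_one_iff]
    tauto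
  have hone : fromBlocks (bisymm 1) 0 0 (bisymm 1) = (1 : Mat4) := by
    rw [map_one, fromBlocks_one]
  have hQ : fromBlocks (bisymm ![1, -1]) 0 0 (bisymm ![1, -1]) = Qmat := by
    simp [Qmat, qR, bisymm_apply]
  have hneg (v : Fin 2 → ℝ) : fromBlocks (bisymm (-v)) 0 0 (bisymm (-v)) =
      -fromBlocks (bisymm v) 0 0 (bisymm v) := by
    rw [map_neg, fromBlocks_neg, neg_zero]
  simp only [hv, or_and_right, exists_or, exists_eq_left, hneg, hone, hQ]
  rfl

theorem actNum_eq_mul_actDenom {N : Mat4} {Z : Mat2} (hZ : Z ∈ Hhat) (h : act N Z = Z) :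
    actNum N Z = Z * actDenom N Z := by
  have hunit : IsUnit (actDenom N Z) := isUnit_actDenom_of_act_mem_Hhat (by rwa [h])
  rw [← act_mul_actDenom hunit, h]

theorem exists_eq_fromBlocks_diag_of_act_eq_self {N : Mat4} (h : ∀ Z ∈ Hhat, act N Z = Z) :
    ∃ A, N = fromBlocks A 0 0 A := by
  obtain ⟨A, B, C, D, rfl⟩ : ∃ A B C D, N = fromBlocks A B C D :=
    ⟨_, _, _, _, (fromBlocks_toBlocks N).symm⟩
  have hscalar {t : ℝ} (ht : 0 < t) (i j : Fin 2) : B i j = -(t ^ 2 * C i j) ∧ A i j = D i j := by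
    have hZ : (t * Complex.I) • (1 : Mat2) ∈ Hhat := by simpa [Hhat] using ht
    have hij := congrFun₂ (actNum_eq_mul_actDenom hZ (h _ hZ)) i j
    have hre_im : B i j = -(t * (t * C i j)) ∧ (A i j = D i j ∨ t = 0) := by
      simpa [actNum, actDenom, Complex.ext_iff] using hij
    exact ⟨by rw [hre_im.1, sq, mul_assoc], hre_im.2.resolve_right ht.ne'⟩
  have hB_one (i j : Fin 2) := (hscalar one_pos i j).1
  have hB_two (i j : Fin 2) := (hscalar two_pos i j).1
  have hC : C = 0 := by ext i j; simp only [Matrix.zero_apply]; linarith [hB_one i j, hB_two i j]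
  have hB : B = 0 := by ext i j; simpa [hC] using hB_one i j
  have hD : D = A := by ext i j; exact (hscalar one_pos i j).2.symm
  exact ⟨A, by rw [hB, hC, hD]⟩

theorem exists_eq_bisymm_of_act_eq_self {A : Mat2R}
    (h : ∀ Z ∈ Hhat, act (fromBlocks A 0 0 A) Z = Z) : ∃ v, A = bisymm v := by
  have hZ : !![2 * Complex.I, Complex.I; Complex.I, 2 * Complex.I] ∈ Hhat := by simp [Hhat]
  have hcomm := actNum_eq_mul_actDenom hZ (h _ hZ)
  have h₀₀ : A 0 0 * 2 + A 0 1 = 2 * A 0 0 + A 1 0 := by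
    simpa [actNum, actDenom, Complex.ext_iff, mul_apply] using congrFun₂ hcomm 0 0
  have h₀₁ : A 0 0 + A 0 1 * 2 = 2 * A 0 1 + A 1 1 := by
    simpa [actNum, actDenom, Complex.ext_iff, mul_apply] using congrFun₂ hcomm 0 1
  exact ⟨_, (bisymm_eq_of_apply_eq (by linarith) (by linarith)).symm⟩

theorem Qmat_mem_Omega2 : Qmat ∈ Omega2 := by
  rw [Qmat, fromBlocks_diag_mem_Omega2_iff]
  ext i j
  fin_cases i <;> fin_cases j <;> simp [qR, mul_apply]

theorem act_eq_self_of_mem {N : Mat4} {Z : Mat2} (hN : N ∈ ({1, -1, Qmat, -Qmat} : Set Mat4))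
    (hZ : Z ∈ Hhat) : act N Z = Z := by
  obtain ⟨v, hv, rfl⟩ := mem_pm_one_Qmat_iff.1 hN
  obtain ⟨w, rfl⟩ := exists_ofHalfPlanes_eq hZ
  have hv' : bisymm (fun i ↦ (v i : ℂ)) * bisymm (fun i ↦ (v i : ℂ)) = 1 := by
    rw [← bisymm_map_ofReal, ← map_ofReal_mul, ← map_mul, hv]
    simp
  rw [act_fromBlocks_diag, bisymm_map_ofReal, inv_eq_right_inv hv', ofHalfPlanes,
    (commute_bisymm _ _).eq, mul_assoc, hv', mul_one]

theorem forall_act_eq_self_iff {N : Mat4} (hN : N ∈ Omega2) :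
    (∀ Z ∈ Hhat, act N Z = Z) ↔ N ∈ ({1, -1, Qmat, -Qmat} : Set Mat4) := by
  refine ⟨fun h ↦ mem_pm_one_Qmat_iff.2 ?_, fun hmem Z hZ ↦ act_eq_self_of_mem hmem hZ⟩
  obtain ⟨A, rfl⟩ := exists_eq_fromBlocks_diag_of_act_eq_self h
  obtain ⟨v, rfl⟩ := exists_eq_bisymm_of_act_eq_self h
  rw [fromBlocks_diag_mem_Omega2_iff, transpose_bisymm, ← map_mul] at hN
  exact ⟨v, bisymm_injective (by rw [hN, map_one]), rfl⟩

theorem forall_act_eq_act_iff {M M' : Mat4} (hM : M ∈ OmegaHat) (hM' : M' ∈ Omega2) :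
    (∀ Z ∈ Hhat, act M' Z = act M Z) ↔ ∃ N ∈ ({1, -1, Qmat, -Qmat} : Set Mat4), M' = M * N := by
  have hdet : IsUnit M.det := (isUnit_iff_isUnit_det M).1 (isUnit_of_mem_Omega2 hM.1)
  constructor
  · intro h
    refine ⟨M⁻¹ * M', (forall_act_eq_self_iff (mul_mem_Omega2 (inv_mem_Omega2 hM.1) hM')).1
      fun Z hZ ↦ ?_, (mul_nonsing_inv_cancel_left _ _ hdet).symm⟩
    have hMZ : IsUnit (actDenom M Z) := isUnit_actDenom_of_act_mem_Hhat (hM.2 Z hZ)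
    have hM'Z : IsUnit (actDenom M' Z) :=
      isUnit_actDenom_of_act_mem_Hhat (h Z hZ ▸ hM.2 Z hZ)
    calc act (M⁻¹ * M') Z = act M⁻¹ (act M Z) := by rw [act_mul hM'Z, h Z hZ]
      _ = act (M⁻¹ * M) Z := (act_mul hMZ).symm
      _ = Z := by rw [nonsing_inv_mul _ hdet, act_one]
  · rintro ⟨N, hN, rfl⟩ Z hZ
    have hNZ : act N Z = Z := act_eq_self_of_mem hN hZ
    rw [act_mul (isUnit_actDenom_of_act_mem_Hhat (by rwa [hNZ])), hNZ]

theorem Qmat_mul_eq_or {M : Mat4} (hM : M ∈ OmegaHat) :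
    Qmat * M = M * Qmat ∨ Qmat * M = -(M * Qmat) := by
  have hact : ∀ Z ∈ Hhat, act (Qmat * M) Z = act M Z := fun Z hZ ↦ by
    rw [act_mul (isUnit_actDenom_of_act_mem_Hhat (hM.2 Z hZ)),
      act_eq_self_of_mem (by simp) (hM.2 Z hZ)]
  have hM_unit := isUnit_of_mem_Omega2 hM.1
  have hQ_entry : Qmat (.inl 0) (.inl 1) = 1 := rfl
  obtain ⟨N, rfl | rfl | rfl | rfl, hN⟩ :=
    (forall_act_eq_act_iff hM (mul_mem_Omega2 Qmat_mem_Omega2 hM.1)).1 hact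
  · have hQ : Qmat = 1 := hM_unit.mul_right_cancel (by rw [hN, mul_one, one_mul])
    simp [hQ] at hQ_entry
  · have hQ : Qmat = -1 := hM_unit.mul_right_cancel (by rw [hN, mul_neg_one, neg_one_mul])
    simp [hQ] at hQ_entry
  · exact .inl hN
  · exact .inr (by rw [hN, mul_neg])

end Kernel

/-- every biholomorphic self-map of `Ĥ₂` is `Z ↦ M<Z>` for some
`M ∈ Ω̂₂`, and `M, M′ ∈ Ω̂₂` induce the same map iff `M′ ∈ {±M, ±QM}` (so the
group of biholomorphic self-maps of `Ĥ₂` is `Ω̂₂/{±I, ±Q}`). -/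
theorem stmt_7 :
    (∀ f g : ℂ × ℂ → ℂ × ℂ,
      Set.MapsTo f HhatP HhatP → Set.MapsTo g HhatP HhatP →
      (∀ p ∈ HhatP, g (f p) = p) → (∀ p ∈ HhatP, f (g p) = p) →
      DifferentiableOn ℂ f HhatP → DifferentiableOn ℂ g HhatP →
      ∃ M ∈ OmegaHat, ∀ p ∈ HhatP,
        f p = (act M (mk2 p) 0 0, act M (mk2 p) 0 1)) ∧
    (∀ M ∈ OmegaHat, ∀ M' ∈ OmegaHat,
      ((∀ Z ∈ Hhat, act M' Z = act M Z) ↔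
        (M' = M ∨ M' = -M ∨ M' = Qmat * M ∨ M' = -(Qmat * M)))) := by
  refine ⟨fun f g hf hg hgf hfg hfd hgd ↦ ?_, fun M hM M' hM' ↦ ?_⟩
  · obtain ⟨M, hM, hact⟩ := exists_mem_OmegaHat_act_eq_mk2 ⟨hf, hg, ⟨hgf, hfg⟩, hfd, hgd⟩
    refine ⟨M, hM, fun p hp ↦ ?_⟩
    rw [hact p hp]
    rfl
  · rw [forall_act_eq_act_iff hM hM'.1]
    rcases Qmat_mul_eq_or hM with hQM | hQM
    · simp [hQM]
    · simp [hQM, or_comm]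
end
end

section
/- Let Z, Z₁ be a pair of points in Ĥ₂. Then there exists M ∈ Ω̂₂ such that M<Z₁> = iI and M<Z> = iΛ, where Λ = [[λ₁,λ₂],[λ₂,λ₁]] is a real bi-symmetric matrix satisfying λ₁ ≥ λ₂ + 1 and λ₂ ≥ 0. Moreover Λ is unique: if M′ ∈ Ω̂₂ also satisfies M′<Z₁> = iI and M′<Z> = iΛ′ with Λ′ = [[λ₁′,λ₂′],[λ₂′,λ₁′]] real, λ₁′ ≥ λ₂′ + 1, λ₂′ ≥ 0, then Λ′ = Λ. -/
open Matrix Complex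

noncomputable section

/-! A bi-symmetric matrix is determined by its two eigenvalues `τ + z` and `τ - z`, which identifies
`Ĥ₂` with `ℍ × ℍ`. The group `Ω̂₂` contains `SL₂(ℝ) × SL₂(ℝ)`, acting factorwise, and the exchange
of the two factors. Moving the two components of `Z₁` to `i` and those of `Z` onto the imaginary
axis at or above `i`, then exchanging the factors if necessary, gives the reduced form: `iΛ` has
components `eᵃ i` and `eᵇ i` with `0 ≤ b ≤ a`.

For uniqueness, every symplectic `M` preserves the spectrum of a matrix cross-ratio of a pair of
points. On `Ĥ₂` this spectrum is `{cosh² (d₁ / 2), cosh² (d₂ / 2)}`, where `d₁` and `d₂` are the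
hyperbolic distances between corresponding components. So `Ω̂₂` preserves the unordered pair of
distances, and for the reduced form this pair is `{a, b}`.
-/

open scoped ComplexConjugate MatrixGroups UpperHalfPlane

section Symplectic

variable {l R : Type*} [Fintype l] [DecidableEq l] [CommRing R]

/-- Homogeneous coordinates `[Z; 1]` of the matrix `Z`. -/
def homogeneous (Z : Matrix l l R) : Matrix (l ⊕ l) l R := fromRows Z 1

/-- `M` carries `Z` to `Z'` under the generalized Möbius action, expressed without a matrix inverse:
`M [Z; 1]` and `[Z'; 1]` have the same column span. -/
def MoebiusMapsTo (M : Matrix (l ⊕ l) (l ⊕ l) R) (Z Z' : Matrix l l R) : Prop :=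
  ∃ D : (Matrix l l R)ˣ, M * homogeneous Z = homogeneous Z' * (D : Matrix l l R)

lemma MoebiusMapsTo.mul {M N : Matrix (l ⊕ l) (l ⊕ l) R} {Z Z' Z'' : Matrix l l R}
    (hM : MoebiusMapsTo M Z' Z'') (hN : MoebiusMapsTo N Z Z') : MoebiusMapsTo (M * N) Z Z'' := by
  obtain ⟨D, hD⟩ := hM
  obtain ⟨E, hE⟩ := hN
  exact ⟨D * E, by
    rw [Matrix.mul_assoc, hE, ← Matrix.mul_assoc, hD, Units.val_mul, Matrix.mul_assoc]⟩

variable [StarRing R]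

lemma conjTranspose_homogeneous_mul_J_mul_homogeneous (Z W : Matrix l l R) :
    (homogeneous W)ᴴ * J l R * homogeneous Z = Z - Wᴴ := by
  simp [homogeneous, conjTranspose_fromRows_eq_fromCols_conjTranspose, J, Matrix.mul_assoc,
    fromBlocks_mul_fromRows, fromCols_mul_fromRows, neg_add_eq_sub]

lemma conjTranspose_mul_sub_mul_eq_sub {M : Matrix (l ⊕ l) (l ⊕ l) R}
    (hM : Mᴴ * J l R * M = J l R) {Z Z' W W' D E : Matrix l l R}
    (hZ : M * homogeneous Z = homogeneous Z' * D) (hW : M * homogeneous W = homogeneous W' * E) :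
    Eᴴ * (Z' - W'ᴴ) * D = Z - Wᴴ :=
  calc Eᴴ * (Z' - W'ᴴ) * D
      = (homogeneous W' * E)ᴴ * J l R * (homogeneous Z' * D) := by
        rw [← conjTranspose_homogeneous_mul_J_mul_homogeneous, conjTranspose_mul]
        simp only [Matrix.mul_assoc]
    _ = (homogeneous W)ᴴ * (Mᴴ * J l R * M) * homogeneous Z := by
        rw [← hZ, ← hW, conjTranspose_mul]
        simp only [Matrix.mul_assoc]
    _ = Z - Wᴴ := by rw [hM, conjTranspose_homogeneous_mul_J_mul_homogeneous]

/-- The matrix cross-ratio of `Z, Wᴴ, W, Zᴴ`, a variant of Siegel's in which `Zᴴ` takes the place of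
the complex conjugate of a symmetric `Z`. -/
def hermitianCrossRatio (Z W : Matrix l l R) : Matrix l l R :=
  (Z - Wᴴ) * (Z - Zᴴ)⁻¹ * (W - Zᴴ) * (W - Wᴴ)⁻¹

lemma spectrum_hermitianCrossRatio_eq {M : Matrix (l ⊕ l) (l ⊕ l) R}
    (hM : Mᴴ * J l R * M = J l R) {Z Z' W W' : Matrix l l R}
    (hZ : MoebiusMapsTo M Z Z') (hW : MoebiusMapsTo M W W') :
    spectrum R (hermitianCrossRatio Z W) = spectrum R (hermitianCrossRatio Z' W') := by
  obtain ⟨D, hD⟩ := hZ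
  obtain ⟨E, hE⟩ := hW
  have conj_cancel : hermitianCrossRatio Z W =
      (star E : (Matrix l l R)ˣ) * hermitianCrossRatio Z' W' * ((star E)⁻¹ : (Matrix l l R)ˣ) := by
    rw [hermitianCrossRatio, ← conjTranspose_mul_sub_mul_eq_sub hM hD hE,
      ← conjTranspose_mul_sub_mul_eq_sub hM hD hD, ← conjTranspose_mul_sub_mul_eq_sub hM hE hD,
      ← conjTranspose_mul_sub_mul_eq_sub hM hE hE, hermitianCrossRatio]
    simp only [← star_eq_conjTranspose, ← Units.coe_star, Matrix.mul_inv_rev, ← coe_units_inv,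
      Matrix.mul_assoc, Units.mul_inv_cancel_left, Units.inv_mul_cancel_left]
  rw [conj_cancel, spectrum.units_conjugate]

end Symplectic

section Bisymmetric

variable {K : Type*} [Field K] [NeZero (2 : K)]

/-- The bi-symmetric matrix `[[a, b], [b, a]]` with eigenvalues `a + b = p.1` and `a - b = p.2`.
These coordinates turn the algebra of bi-symmetric matrices into `K × K`. -/
def bisym : K × K →ₐ[K] Matrix (Fin 2) (Fin 2) K where
  toFun p := !![(p.1 + p.2) / 2, (p.1 - p.2) / 2; (p.1 - p.2) / 2, (p.1 + p.2) / 2]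
  map_one' := by ext i j; fin_cases i <;> fin_cases j <;> simp [one_add_one_eq_two, NeZero.ne]
  map_mul' p q := by
    ext i j; fin_cases i <;> fin_cases j <;> simp [Matrix.mul_apply] <;> field_simp <;> ring
  map_zero' := by ext i j; fin_cases i <;> fin_cases j <;> simp
  map_add' p q := by ext i j; fin_cases i <;> fin_cases j <;> simp <;> ring
  commutes' r := by
    ext i j; fin_cases i <;> fin_cases j <;> simp [Matrix.algebraMap_matrix_apply]

lemma bisym_apply (p : K × K) :
    bisym p = !![(p.1 + p.2) / 2, (p.1 - p.2) / 2; (p.1 - p.2) / 2, (p.1 + p.2) / 2] := rfl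

lemma transpose_bisym (p : K × K) : (bisym p)ᵀ = bisym p := by
  ext i j; fin_cases i <;> fin_cases j <;> rfl

lemma conjTranspose_bisym [StarRing K] (p : K × K) : (bisym p)ᴴ = bisym (star p) := by
  ext i j; fin_cases i <;> fin_cases j <;> simp [bisym_apply]

lemma map_ofReal_bisym (p : ℝ × ℝ) :
    (bisym p).map Complex.ofReal = bisym ((p.1 : ℂ), (p.2 : ℂ)) := by
  ext i j; fin_cases i <;> fin_cases j <;> simp [bisym_apply]

lemma det_bisym (p : K × K) : (bisym p).det = p.1 * p.2 := by
  rw [bisym_apply, det_fin_two_of]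
  field_simp
  ring

lemma isUnit_bisym_iff {p : K × K} : IsUnit (bisym p) ↔ p.1 ≠ 0 ∧ p.2 ≠ 0 := by
  rw [isUnit_iff_isUnit_det, det_bisym, isUnit_iff_ne_zero, mul_ne_zero_iff]

lemma inv_bisym {p : K × K} (h₁ : p.1 ≠ 0) (h₂ : p.2 ≠ 0) : (bisym p)⁻¹ = bisym p⁻¹ := by
  refine inv_eq_right_inv ?_
  rw [← map_mul, ← map_one bisym]
  congr 1
  ext <;> simp [h₁, h₂]

lemma spectrum_bisym (p : K × K) : spectrum K (bisym p) = {p.1, p.2} := by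
  ext r
  rw [spectrum.mem_iff, ← AlgHom.commutes bisym, ← map_sub, isUnit_bisym_iff]
  simp [sub_eq_zero, or_iff_not_imp_left]

/-- The image of `(g, h)` under the block-diagonal embedding of `SL₂ × SL₂` in `Sp₄`, taken in the
eigenbasis of the bi-symmetric matrices. -/
def bisymBlocks (g h : SL(2, K)) : Matrix (Fin 2 ⊕ Fin 2) (Fin 2 ⊕ Fin 2) K :=
  fromBlocks (bisym (g 0 0, h 0 0)) (bisym (g 0 1, h 0 1))
    (bisym (g 1 0, h 1 0)) (bisym (g 1 1, h 1 1))

lemma bisymBlocks_mem_symplecticGroup (g h : SL(2, K)) :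
    bisymBlocks g h ∈ symplecticGroup (Fin 2) K := by
  rw [bisymBlocks, SymplecticGroup.fromBlocks_mem_iff]
  simp only [transpose_bisym, ← map_mul, ← map_sub, ← map_one bisym]
  refine ⟨?_, ?_, ?_⟩ <;> congr 1
  · exact mul_comm _ _
  · exact mul_comm _ _
  · ext
    · simpa [mul_comm] using (det_fin_two (g : Matrix _ _ K)).symm.trans g.det_coe
    · simpa [mul_comm] using (det_fin_two (h : Matrix _ _ K)).symm.trans h.det_coe

end Bisymmetric

section UpperHalfPlane

/-- The arc-length parametrization `a ↦ eᵃ i` of the imaginary axis, a hyperbolic geodesic. -/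
def imAxis (a : ℝ) : ℍ := .mk ⟨0, Real.exp a⟩ (Real.exp_pos a)

lemma coe_imAxis (a : ℝ) : (imAxis a : ℂ) = Complex.I * (Real.exp a : ℝ) := by
  apply Complex.ext <;> simp [imAxis, Complex.exp_ofReal_re, Complex.exp_ofReal_im]

lemma imAxis_log_im {z : ℍ} (hz : z.re = 0) : imAxis (Real.log z.im) = z := by
  ext; apply Complex.ext <;> simp [imAxis, hz, Real.exp_log z.im_pos]

lemma dist_imAxis (a b : ℝ) : dist (imAxis a) (imAxis b) = |a - b| :=
  (UpperHalfPlane.isometry_vertical_line 0).dist_eq a b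

/-- Rotation of the hyperbolic plane by the angle `2θ` about `i`. -/
def rotationAboutI (θ : ℝ) : SL(2, ℝ) :=
  ⟨!![Real.cos θ, Real.sin θ; -Real.sin θ, Real.cos θ], by
    rw [det_fin_two_of]; linear_combination Real.cos_sq_add_sin_sq θ⟩

lemma coe_rotationAboutI_smul (θ : ℝ) (z : ℍ) :
    ((rotationAboutI θ • z : ℍ) : ℂ) =
      ((Real.cos θ : ℝ) * z + (Real.sin θ : ℝ)) / (-(Real.sin θ : ℝ) * z + (Real.cos θ : ℝ)) := by
  rw [UpperHalfPlane.coe_specialLinearGroup_apply]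
  simp [rotationAboutI]

lemma rotationAboutI_denom_ne_zero (θ : ℝ) (z : ℍ) :
    -(Real.sin θ : ℝ) * (z : ℂ) + (Real.cos θ : ℝ) ≠ 0 := by
  have h := UpperHalfPlane.denom_ne_zero (rotationAboutI θ : GL (Fin 2) ℝ) z
  rw [UpperHalfPlane.denom, SpecialLinearGroup.coe_GL_coe_matrix] at h
  simpa [rotationAboutI] using h

lemma rotationAboutI_smul_imAxis_zero (θ : ℝ) : rotationAboutI θ • imAxis 0 = imAxis 0 := by
  ext
  rw [coe_rotationAboutI_smul, div_eq_iff (rotationAboutI_denom_ne_zero θ _), coe_imAxis,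
    Real.exp_zero, Complex.ofReal_one, mul_one]
  linear_combination (Real.sin θ : ℂ) * Complex.I_sq

lemma rotationAboutI_pi_div_two_smul_imAxis (a : ℝ) :
    rotationAboutI (Real.pi / 2) • imAxis a = imAxis (-a) := by
  ext
  rw [coe_rotationAboutI_smul, coe_imAxis, coe_imAxis, Real.exp_neg]
  simp [mul_comm]

lemma rotationAboutI_smul_re_eq_zero_iff {θ : ℝ} {z : ℍ} :
    (rotationAboutI θ • z).re = 0 ↔
      Real.cos (2 * θ) * (2 * z.re) + Real.sin (2 * θ) * (1 - Complex.normSq z) = 0 := by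
  have hdenom : Complex.normSq (-(Real.sin θ : ℝ) * z + (Real.cos θ : ℝ)) ≠ 0 :=
    Complex.normSq_eq_zero.not.2 (rotationAboutI_denom_ne_zero θ z)
  rw [← UpperHalfPlane.coe_re, coe_rotationAboutI_smul, Complex.div_re, ← add_div,
    div_eq_zero_iff, or_iff_left hdenom, Real.cos_two_mul', Real.sin_two_mul,
    Complex.normSq_apply, ← Complex.ofReal_neg]
  simp only [Complex.add_re, Complex.add_im, Complex.re_ofReal_mul, Complex.im_ofReal_mul,
    Complex.ofReal_re, Complex.ofReal_im, UpperHalfPlane.coe_re, UpperHalfPlane.coe_im]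
  constructor <;> intro h
  · linear_combination 2 * h
  · linear_combination h / 2

lemma exists_rotationAboutI_smul_re_eq_zero (z : ℍ) : ∃ θ, (rotationAboutI θ • z).re = 0 := by
  -- The sought vector `(cos 2θ, sin 2θ)` is orthogonal to `(2 re z, 1 - |z|²)`.
  set ζ : ℂ := ⟨1 - Complex.normSq z, -(2 * z.re)⟩
  refine ⟨ζ.arg / 2, rotationAboutI_smul_re_eq_zero_iff.2 ?_⟩
  rw [mul_div_cancel₀ _ two_ne_zero]
  linear_combination Real.sin ζ.arg * (Complex.norm_mul_cos_arg ζ).symm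
    - Real.cos ζ.arg * (Complex.norm_mul_sin_arg ζ).symm

lemma exists_smul_eq_imAxis_dist (z w : ℍ) :
    ∃ g : SL(2, ℝ), g • z = imAxis 0 ∧ g • w = imAxis (dist z w) := by
  obtain ⟨g, hgz⟩ := MulAction.exists_smul_eq SL(2, ℝ) z (imAxis 0)
  obtain ⟨θ, hθ⟩ := exists_rotationAboutI_smul_re_eq_zero (g • w)
  set k := rotationAboutI θ * g with hk
  have hkz : k • z = imAxis 0 := by rw [hk, mul_smul, hgz, rotationAboutI_smul_imAxis_zero]
  obtain ⟨a, hkw⟩ : ∃ a, k • w = imAxis a :=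
    ⟨_, (imAxis_log_im (by rwa [hk, mul_smul])).symm⟩
  have hdist : dist z w = |a| := by
    rw [← dist_smul k, hkz, hkw, dist_imAxis, zero_sub, abs_neg]
  rcases abs_choice a with ha | ha
  · exact ⟨k, hkz, by rw [hkw, hdist, ha]⟩
  · refine ⟨rotationAboutI (Real.pi / 2) * k, ?_, ?_⟩
    · rw [mul_smul, hkz, rotationAboutI_smul_imAxis_zero]
    · rw [mul_smul, hkw, rotationAboutI_pi_div_two_smul_imAxis, hdist, ha]

lemma cosh_half_dist_sq_eq_crossRatio (z w : ℍ) :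
    ((Real.cosh (dist z w / 2) ^ 2 : ℝ) : ℂ) =
      (z - conj (w : ℂ)) * (z - conj (z : ℂ))⁻¹ * (w - conj (z : ℂ)) * (w - conj (w : ℂ))⁻¹ := by
  have hz : (z.im : ℂ) ≠ 0 := by exact_mod_cast z.im_ne_zero
  have hw : (w.im : ℂ) ≠ 0 := by exact_mod_cast w.im_ne_zero
  rw [UpperHalfPlane.cosh_half_dist, div_pow, mul_pow, Real.sq_sqrt (by positivity),
    Complex.dist_eq, Complex.sq_norm, Complex.sub_conj, Complex.sub_conj]
  push_cast
  rw [← Complex.mul_conj]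
  simp only [map_sub, Complex.conj_conj, UpperHalfPlane.coe_im]
  field_simp
  rw [Complex.I_sq]
  ring

lemma injOn_cosh_half_sq :
    Set.InjOn (fun d : ℝ => ((Real.cosh (d / 2) ^ 2 : ℝ) : ℂ)) (Set.Ici 0) := by
  intro a ha b hb hab
  have hcosh : Real.cosh (a / 2) = Real.cosh (b / 2) :=
    (sq_eq_sq₀ (Real.cosh_pos _).le (Real.cosh_pos _).le).1 (Complex.ofReal_injective hab)
  have := Real.cosh_injOn (Set.mem_Ici.2 (div_nonneg (Set.mem_Ici.1 ha) zero_le_two))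
    (Set.mem_Ici.2 (div_nonneg (Set.mem_Ici.1 hb) zero_le_two)) hcosh
  linarith

end UpperHalfPlane

section Hhat

/-- The identification of `ℍ × ℍ` with `Ĥ₂` by the eigenvalues of a bi-symmetric matrix. -/
def toHhat (z w : ℍ) : Mat2 := bisym ((z : ℂ), (w : ℂ))

lemma mem_Hhat_iff {Z : Mat2} : Z ∈ Hhat ↔ ∃ z w : ℍ, Z = toHhat z w := by
  constructor
  · rintro ⟨h₁₁, h₁₀, him⟩
    obtain ⟨hsum, hdiff⟩ := abs_lt.1 him
    refine ⟨.mk (Z 0 0 + Z 0 1) (by rw [Complex.add_im]; linarith),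
      .mk (Z 0 0 - Z 0 1) (by rw [Complex.sub_im]; linarith), ?_⟩
    ext i j; fin_cases i <;> fin_cases j <;> simp [toHhat, bisym_apply, h₁₁, h₁₀]
  · rintro ⟨z, w, rfl⟩
    refine ⟨rfl, rfl, abs_lt.2 ?_⟩
    simp only [toHhat, bisym_apply, of_apply, cons_val', cons_val_zero, cons_val_one,
      Complex.div_ofNat_im, Complex.add_im, Complex.sub_im, UpperHalfPlane.coe_im]
    constructor <;> linarith [z.im_pos, w.im_pos]

lemma spectrum_hermitianCrossRatio_toHhat (z w z' w' : ℍ) :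
    spectrum ℂ (hermitianCrossRatio (toHhat z w) (toHhat z' w')) =
      (fun d : ℝ => ((Real.cosh (d / 2) ^ 2 : ℝ) : ℂ)) '' {dist z z', dist w w'} := by
  have sub_conj_ne_zero (z w : ℍ) : (z : ℂ) - conj (w : ℂ) ≠ 0 := fun h => by
    have him : z.im + w.im = 0 := by simpa using congrArg Complex.im h
    linarith [z.im_pos, w.im_pos]
  rw [Set.image_pair, cosh_half_dist_sq_eq_crossRatio, cosh_half_dist_sq_eq_crossRatio,
    ← spectrum_bisym (_, _)]
  simp only [hermitianCrossRatio, toHhat, conjTranspose_bisym, ← map_sub]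
  rw [inv_bisym (sub_conj_ne_zero _ _) (sub_conj_ne_zero _ _),
    inv_bisym (sub_conj_ne_zero _ _) (sub_conj_ne_zero _ _), ← map_mul, ← map_mul, ← map_mul]
  rfl

lemma Omega2_eq_symplecticGroup : Omega2 = symplecticGroup (Fin 2) ℝ := by
  have hJ : Jmat = -J (Fin 2) ℝ := by simp [Jmat, J, fromBlocks_neg]
  ext M
  simp [Omega2, hJ, SymplecticGroup.mem_iff']

lemma conjTranspose_mul_J_mul_of_mem_Omega2 {M : Mat4} (hM : M ∈ Omega2) :
    (M.map Complex.ofReal)ᴴ * J (Fin 2) ℂ * M.map Complex.ofReal = J (Fin 2) ℂ := by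
  rw [Omega2_eq_symplecticGroup] at hM
  have hreal : (M.map Complex.ofReal)ᴴ = (M.map Complex.ofReal)ᵀ := by ext; simp
  rw [hreal]
  exact SymplecticGroup.mem_iff'.1 (SymplecticGroup.map_mem hM Complex.ofRealHom)

lemma map_mul_homogeneous (M : Mat4) (Z : Mat2) :
    M.map Complex.ofReal * homogeneous Z =
      fromRows (M.toBlocks₁₁.map Complex.ofReal * Z + M.toBlocks₁₂.map Complex.ofReal)
        (M.toBlocks₂₁.map Complex.ofReal * Z + M.toBlocks₂₂.map Complex.ofReal) := by
  conv_lhs => rw [← fromBlocks_toBlocks M]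
  rw [homogeneous, fromBlocks_map, fromBlocks_mul_fromRows]
  simp only [Matrix.mul_one]

lemma act_eq_of_moebiusMapsTo {M : Mat4} {Z Z' : Mat2}
    (h : MoebiusMapsTo (M.map Complex.ofReal) Z Z') : act M Z = Z' := by
  obtain ⟨D, hD⟩ := h
  rw [map_mul_homogeneous, homogeneous, fromRows_mul, fromRows_ext_iff, Matrix.one_mul] at hD
  rw [act, hD.1, hD.2, ← coe_units_inv, Units.mul_inv_cancel_right]

lemma moebiusMapsTo_act {M : Mat4} {Z : Mat2} (h : act M Z ∈ Hhat) :
    MoebiusMapsTo (M.map Complex.ofReal) Z (act M Z) := by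
  set D := M.toBlocks₂₁.map Complex.ofReal * Z + M.toBlocks₂₂.map Complex.ofReal with hD
  -- A singular `D` has `D⁻¹ = 0`, hence `act M Z = 0`, which is not in `Hhat`.
  have hunit : IsUnit D.det := by
    by_contra hsing
    have hzero : act M Z = 0 := by
      rw [act, nonsing_inv_apply_not_isUnit _ hsing, Matrix.mul_zero]
    simp [hzero, Hhat] at h
  refine ⟨nonsingInvUnit D hunit, ?_⟩
  rw [map_mul_homogeneous, homogeneous, fromRows_mul, Matrix.one_mul, act, ← hD]
  exact congrArg (fromRows · D) (nonsing_inv_mul_cancel_right _ _ hunit).symm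

lemma act_mul_s8 {M N : Mat4} (hM : M ∈ OmegaHat) (hN : N ∈ OmegaHat) {Z : Mat2} (hZ : Z ∈ Hhat) :
    act (M * N) Z = act M (act N Z) := by
  refine act_eq_of_moebiusMapsTo ?_
  have hmap : (M * N).map Complex.ofReal = M.map Complex.ofReal * N.map Complex.ofReal :=
    Matrix.map_mul (f := Complex.ofRealHom)
  rw [hmap]
  exact (moebiusMapsTo_act (hM.2 _ (hN.2 Z hZ))).mul (moebiusMapsTo_act (hN.2 Z hZ))

lemma mul_mem_OmegaHat {M N : Mat4} (hM : M ∈ OmegaHat) (hN : N ∈ OmegaHat) :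
    M * N ∈ OmegaHat := by
  refine ⟨?_, fun Z hZ => act_mul_s8 hM hN hZ ▸ hM.2 _ (hN.2 Z hZ)⟩
  have hMS := hM.1
  have hNS := hN.1
  rw [Omega2_eq_symplecticGroup] at hMS hNS ⊢
  exact mul_mem hMS hNS

lemma act_bisymBlocks (g h : SL(2, ℝ)) (z w : ℍ) :
    act (bisymBlocks g h) (toHhat z w) = toHhat (g • z) (h • w) := by
  have hg := UpperHalfPlane.denom_ne_zero (g : GL (Fin 2) ℝ) z
  have hh := UpperHalfPlane.denom_ne_zero (h : GL (Fin 2) ℝ) w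
  simp only [UpperHalfPlane.denom, SpecialLinearGroup.coe_GL_coe_matrix] at hg hh
  simp only [act, bisymBlocks, toBlocks_fromBlocks₁₁, toBlocks_fromBlocks₁₂,
    toBlocks_fromBlocks₂₁, toBlocks_fromBlocks₂₂, map_ofReal_bisym, toHhat, ← map_mul, ← map_add]
  rw [inv_bisym (by simpa using hg) (by simpa using hh), ← map_mul,
    UpperHalfPlane.coe_specialLinearGroup_apply, UpperHalfPlane.coe_specialLinearGroup_apply]
  rfl

lemma bisymBlocks_mem_OmegaHat (g h : SL(2, ℝ)) : bisymBlocks g h ∈ OmegaHat := by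
  refine ⟨Omega2_eq_symplecticGroup ▸ bisymBlocks_mem_symplecticGroup g h, fun Z hZ => ?_⟩
  obtain ⟨z, w, rfl⟩ := mem_Hhat_iff.1 hZ
  exact mem_Hhat_iff.2 ⟨_, _, act_bisymBlocks g h z w⟩

/-- The element of `Ω̂₂` acting by `Z ↦ E Z E` with `E = diag(1, -1)`, which exchanges the two
eigenvalues of a bi-symmetric matrix. -/
def eigenvalueSwap : Mat4 := fromBlocks (diagonal ![1, -1]) 0 0 (diagonal ![1, -1])

lemma act_eigenvalueSwap (z w : ℍ) : act eigenvalueSwap (toHhat z w) = toHhat w z := by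
  have hmap : (diagonal ![1, -1] : Mat2R).map Complex.ofReal = diagonal ![1, -1] := by
    ext i j; fin_cases i <;> fin_cases j <;> simp
  have hinv : (diagonal ![1, -1] : Mat2)⁻¹ = diagonal ![1, -1] := by
    refine inv_eq_right_inv ?_
    ext i j; fin_cases i <;> fin_cases j <;> simp
  ext i j; fin_cases i <;> fin_cases j <;>
    simp [act, eigenvalueSwap, hmap, hinv, toHhat, bisym_apply] <;> ring

lemma eigenvalueSwap_mem_OmegaHat : eigenvalueSwap ∈ OmegaHat := by
  refine ⟨?_, fun Z hZ => ?_⟩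
  · rw [Omega2_eq_symplecticGroup]
    refine SymplecticGroup.fromBlocks_mem_iff.2 ⟨by simp, by simp, ?_⟩
    ext i j; fin_cases i <;> fin_cases j <;> simp
  · obtain ⟨z, w, rfl⟩ := mem_Hhat_iff.1 hZ
    exact mem_Hhat_iff.2 ⟨_, _, act_eigenvalueSwap z w⟩

lemma pair_dist_eq_of_act {M : Mat4} (hM : M ∈ OmegaHat) {z w z' w' u v u' v' : ℍ}
    (h : act M (toHhat z w) = toHhat u v) (h' : act M (toHhat z' w') = toHhat u' v') :
    ({dist z z', dist w w'} : Set ℝ) = {dist u u', dist v v'} := by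
  have mapsTo (x y : ℍ) : MoebiusMapsTo (M.map Complex.ofReal) (toHhat x y) (act M (toHhat x y)) :=
    moebiusMapsTo_act (hM.2 _ (mem_Hhat_iff.2 ⟨x, y, rfl⟩))
  have hspectrum := spectrum_hermitianCrossRatio_eq
    (conjTranspose_mul_J_mul_of_mem_Omega2 hM.1) (mapsTo z w) (mapsTo z' w')
  rw [h, h', spectrum_hermitianCrossRatio_toHhat, spectrum_hermitianCrossRatio_toHhat] at hspectrum
  exact (injOn_cosh_half_sq.image_eq_image_iff (by simp [Set.insert_subset_iff])
    (by simp [Set.insert_subset_iff])).1 hspectrum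

lemma exists_reduced_pair (z w z₁ w₁ : ℍ) :
    ∃ M ∈ OmegaHat, ∃ a b : ℝ, 0 ≤ b ∧ b ≤ a ∧
      act M (toHhat z₁ w₁) = toHhat (imAxis 0) (imAxis 0) ∧
      act M (toHhat z w) = toHhat (imAxis a) (imAxis b) := by
  obtain ⟨g, hgz₁, hgz⟩ := exists_smul_eq_imAxis_dist z₁ z
  obtain ⟨h, hhw₁, hhw⟩ := exists_smul_eq_imAxis_dist w₁ w
  have hB := bisymBlocks_mem_OmegaHat g h
  rcases le_total (dist w₁ w) (dist z₁ z) with hle | hle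
  · refine ⟨_, hB, _, _, dist_nonneg, hle, ?_, ?_⟩
    · rw [act_bisymBlocks, hgz₁, hhw₁]
    · rw [act_bisymBlocks, hgz, hhw]
  · have act_swap_mul (x y : ℍ) :
        act (eigenvalueSwap * bisymBlocks g h) (toHhat x y) = toHhat (h • y) (g • x) := by
      rw [act_mul_s8 eigenvalueSwap_mem_OmegaHat hB (mem_Hhat_iff.2 ⟨x, y, rfl⟩), act_bisymBlocks,
        act_eigenvalueSwap]
    refine ⟨_, mul_mem_OmegaHat eigenvalueSwap_mem_OmegaHat hB, _, _, dist_nonneg, hle, ?_, ?_⟩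
    · rw [act_swap_mul, hgz₁, hhw₁]
    · rw [act_swap_mul, hgz, hhw]

lemma reduced_pair_unique {M M' : Mat4} (hM : M ∈ OmegaHat) (hM' : M' ∈ OmegaHat)
    {z w z₁ w₁ : ℍ} {a b a' b' : ℝ} (hb : 0 ≤ b) (hba : b ≤ a) (hb' : 0 ≤ b') (hba' : b' ≤ a')
    (hMZ₁ : act M (toHhat z₁ w₁) = toHhat (imAxis 0) (imAxis 0))
    (hMZ : act M (toHhat z w) = toHhat (imAxis a) (imAxis b))
    (hM'Z₁ : act M' (toHhat z₁ w₁) = toHhat (imAxis 0) (imAxis 0))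
    (hM'Z : act M' (toHhat z w) = toHhat (imAxis a') (imAxis b')) : a' = a ∧ b' = b := by
  have hpair := (pair_dist_eq_of_act hM' hM'Z hM'Z₁).symm.trans (pair_dist_eq_of_act hM hMZ hMZ₁)
  simp only [dist_imAxis, sub_zero, abs_of_nonneg hb, abs_of_nonneg hb',
    abs_of_nonneg (hb.trans hba), abs_of_nonneg (hb'.trans hba'), Set.pair_eq_pair_iff] at hpair
  rcases hpair with hsame | ⟨hab, hba⟩
  · exact hsame
  · constructor <;> linarith

lemma I_smul_one_eq_toHhat : Complex.I • (1 : Mat2) = toHhat (imAxis 0) (imAxis 0) := by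
  ext i j; fin_cases i <;> fin_cases j <;> simp [toHhat, bisym_apply, coe_imAxis]

lemma I_smul_eq_toHhat {l₁ l₂ a b : ℝ} (ha : Real.exp a = l₁ + l₂) (hb : Real.exp b = l₁ - l₂) :
    Complex.I • !![(l₁ : ℂ), (l₂ : ℂ); (l₂ : ℂ), (l₁ : ℂ)] = toHhat (imAxis a) (imAxis b) := by
  ext i j; fin_cases i <;> fin_cases j <;>
    simp only [toHhat, bisym_apply, coe_imAxis, ha, hb] <;> simp <;> ring

end Hhat

/-- reduced form of a pair of points of `Ĥ₂`: some `M ∈ Ω̂₂` sends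
`Z₁` to `iI` and `Z` to `iΛ` with `Λ = [[λ₁,λ₂],[λ₂,λ₁]]`, `λ₁ ≥ λ₂ + 1`,
`λ₂ ≥ 0`; and `Λ` is unique. -/
theorem stmt_8 (Z Z₁ : Mat2) (hZ : Z ∈ Hhat) (hZ₁ : Z₁ ∈ Hhat) :
    ∃ M ∈ OmegaHat, ∃ l₁ l₂ : ℝ, 0 ≤ l₂ ∧ l₂ + 1 ≤ l₁ ∧
      act M Z₁ = Complex.I • (1 : Mat2) ∧
      act M Z = Complex.I • !![(l₁ : ℂ), (l₂ : ℂ); (l₂ : ℂ), (l₁ : ℂ)] ∧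
      ∀ M' ∈ OmegaHat, ∀ l₁' l₂' : ℝ, 0 ≤ l₂' → l₂' + 1 ≤ l₁' →
        act M' Z₁ = Complex.I • (1 : Mat2) →
        act M' Z = Complex.I • !![(l₁' : ℂ), (l₂' : ℂ); (l₂' : ℂ), (l₁' : ℂ)] →
        l₁' = l₁ ∧ l₂' = l₂ := by
  obtain ⟨z, w, rfl⟩ := mem_Hhat_iff.1 hZ
  obtain ⟨z₁, w₁, rfl⟩ := mem_Hhat_iff.1 hZ₁
  obtain ⟨M, hM, a, b, hb, hba, hMZ₁, hMZ⟩ := exists_reduced_pair z w z₁ w₁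
  refine ⟨M, hM, (Real.exp a + Real.exp b) / 2, (Real.exp a - Real.exp b) / 2, ?_, ?_, ?_, ?_, ?_⟩
  · linarith [Real.exp_le_exp.2 hba]
  · linarith [Real.one_le_exp hb]
  · rw [hMZ₁, I_smul_one_eq_toHhat]
  · rw [hMZ, I_smul_eq_toHhat (a := a) (b := b) (by ring) (by ring)]
  · intro M' hM' l₁' l₂' hl₂' hl₁' hM'Z₁ hM'Z
    have hsum := Real.exp_log (show 0 < l₁' + l₂' by linarith)
    have hdiff := Real.exp_log (show 0 < l₁' - l₂' by linarith)
    rw [I_smul_one_eq_toHhat] at hM'Z₁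
    rw [I_smul_eq_toHhat hsum hdiff] at hM'Z
    obtain ⟨ha', hb'⟩ := reduced_pair_unique hM hM' hb hba (Real.log_nonneg (by linarith))
      (Real.log_le_log (by linarith) (by linarith)) hMZ₁ hMZ hM'Z₁ hM'Z
    rw [ha'] at hsum
    rw [hb'] at hdiff
    constructor <;> linarith
end
end
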